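/- Let n ≥ 2 and 2 ≤ p ≤ n. Let u : ℝⁿ → ℝ be a smooth entire p-plurisubharmonic function which has quadratic growth, solves M_p(D²u(x)) = 1 for all x ∈ ℝⁿ, and is moreover (p−1)-plurisubharmonic. Then u is a quadratic polynomial, i.e. there exist a symmetric matrix A, a vector b ∈ ℝⁿ and c ∈ ℝ with u(x) = ½ xᵀAx + b·x + c for all x. -/

import Mathlib

open scoped BigOperators

noncomputable section

/-- The positive orthant `Γₙ = (0,∞)ⁿ` in `ℝⁿ`. -/
def PosOrthant (n : ℕ) : Set (Fin n → ℝ) := {lam | ∀ i, 0 < lam i}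

/-- A convex invariant cone: an open cone `Γ ⊆ ℝⁿ` with vertex at the origin, `Γ ≠ ℝⁿ`,
which is convex, satisfies `Γ + Γₙ ⊆ Γ`, and is invariant under permutations of coordinates. -/
def IsConvexInvariantCone {n : ℕ} (Γ : Set (Fin n → ℝ)) : Prop :=
  IsOpen Γ ∧ Γ ≠ Set.univ ∧ Convex ℝ Γ ∧
    (∀ lam ∈ Γ, ∀ t : ℝ, 0 < t → t • lam ∈ Γ) ∧
    (∀ lam ∈ Γ, ∀ tau ∈ PosOrthant n, lam + tau ∈ Γ) ∧
    (∀ lam ∈ Γ, ∀ σ : Equiv.Perm (Fin n), lam ∘ σ ∈ Γ)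

/-- The partial derivative `∂f/∂λᵢ(λ)`. -/
def fpd {n : ℕ} (f : (Fin n → ℝ) → ℝ) (i : Fin n) (lam : Fin n → ℝ) : ℝ :=
  fderiv ℝ f lam (Pi.single i 1)

/-- A concave elliptic Hessian operator on a convex invariant cone `Γ`:
a `C²`, permutation-invariant, concave function `f` on `Γ` which is elliptic
(`∂f/∂λᵢ > 0`), positive, and positively homogeneous of degree one. -/
def IsConcaveEllipticHessianOp {n : ℕ} (Γ : Set (Fin n → ℝ)) (f : (Fin n → ℝ) → ℝ) : Prop :=
  ContDiffOn ℝ 2 f Γ ∧ ConcaveOn ℝ Γ f ∧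
    (∀ lam ∈ Γ, ∀ σ : Equiv.Perm (Fin n), f (lam ∘ σ) = f lam) ∧
    (∀ lam ∈ Γ, ∀ i, 0 < fpd f i lam) ∧
    (∀ lam ∈ Γ, 0 < f lam) ∧
    (∀ lam ∈ Γ, ∀ t : ℝ, 0 < t → f (t • lam) = t * f lam)

/-- Condition N: whenever `λ ∈ Γ` satisfies `f(λ) = 1` and `Σᵢ ∂f/∂λᵢ(λ) ≤ C` for some `C > 0`,
then `∂f/∂λᵢ(λ) ≥ 1/(N₁ C^{N₂})` for every `i`. -/
def ConditionN {n : ℕ} (Γ : Set (Fin n → ℝ)) (f : (Fin n → ℝ) → ℝ) (N₁ N₂ : ℝ) : Prop :=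
  ∀ lam ∈ Γ, f lam = 1 → ∀ C : ℝ, 0 < C → (∑ i, fpd f i lam) ≤ C →
    ∀ i, 1 / (N₁ * C ^ N₂) ≤ fpd f i lam

/-- The Hessian matrix `D²u(x)`. -/
def hessianMatrix {n : ℕ} (u : EuclideanSpace ℝ (Fin n) → ℝ) (x : EuclideanSpace ℝ (Fin n)) :
    Matrix (Fin n) (Fin n) ℝ :=
  fun i j => iteratedFDeriv ℝ 2 u x ![EuclideanSpace.single i 1, EuclideanSpace.single j 1]

/-- The vector of eigenvalues `λ(D²u(x))` of the Hessian of `u` at `x`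
(junk value `0` if the Hessian matrix fails to be symmetric). -/
def hessEigen {n : ℕ} (u : EuclideanSpace ℝ (Fin n) → ℝ) (x : EuclideanSpace ℝ (Fin n)) :
    Fin n → ℝ :=
  if h : (hessianMatrix u x).IsHermitian then h.eigenvalues else 0

/-- Condition D for a solution `u` of `F(D²u) = 1` on a set `Ω`: at every point, if an
eigenvalue `λᵢ` of `D²u` exceeds `D₁` then `∂f/∂λᵢ(λ) ⬝ λᵢ ≤ D₂`. -/
def ConditionD {n : ℕ} (f : (Fin n → ℝ) → ℝ) (u : EuclideanSpace ℝ (Fin n) → ℝ)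
    (Ω : Set (EuclideanSpace ℝ (Fin n))) (D₁ D₂ : ℝ) : Prop :=
  ∀ x ∈ Ω, ∀ i, D₁ < hessEigen u x i →
    fpd f i (hessEigen u x) * hessEigen u x i ≤ D₂

/-- The `k`-th elementary symmetric polynomial `σ_k` on `ℝⁿ`. -/
def esymmF (n k : ℕ) (lam : Fin n → ℝ) : ℝ :=
  ∑ s ∈ (Finset.univ : Finset (Fin n)).powersetCard k, ∏ i ∈ s, lam i

/-- The Gårding cone `Γ_k = {λ : σ_j(λ) > 0, j = 1,…,k}`. -/
def GammaK (n k : ℕ) : Set (Fin n → ℝ) :=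
  {lam | ∀ j : ℕ, 1 ≤ j → j ≤ k → 0 < esymmF n j lam}

/-- The cone `Γ̂_p` of vectors all of whose sums of `p` distinct coordinates are positive. -/
def GammaHat (n p : ℕ) : Set (Fin n → ℝ) :=
  {lam | ∀ s : Finset (Fin n), s.card = p → 0 < ∑ i ∈ s, lam i}

/-- The `p`-Monge–Ampère operator `M_p(λ) = ∏_{i₁<⋯<i_p} (λ_{i₁} + ⋯ + λ_{i_p})`. -/
def pMA (n p : ℕ) (lam : Fin n → ℝ) : ℝ :=
  ∏ s ∈ (Finset.univ : Finset (Fin n)).powersetCard p, ∑ i ∈ s, lam i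

/-- Quadratic growth: `u(x) ≥ C⁻¹|x|² − C` for some `C > 0`. -/
def QuadraticGrowth {n : ℕ} (u : EuclideanSpace ℝ (Fin n) → ℝ) : Prop :=
  ∃ C : ℝ, 0 < C ∧ ∀ x, C⁻¹ * ‖x‖ ^ 2 - C ≤ u x

/-- `u` is a quadratic polynomial: `u(x) = ½ xᵀAx + b·x + c` with `A` symmetric. -/
def IsQuadraticPolynomial {n : ℕ} (u : EuclideanSpace ℝ (Fin n) → ℝ) : Prop :=
  ∃ (A : Matrix (Fin n) (Fin n) ℝ) (b : Fin n → ℝ) (c : ℝ), A.IsSymm ∧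
    ∀ x, u x = (1 / 2) * (∑ i, ∑ j, A i j * x i * x j) + (∑ i, b i * x i) + c

/-!
Since `M_p` is the constant `1` and `log M_p` is concave, its gradient at `D²u(x)` supports all
Hessians of `u` from below. Quadratic growth makes the sublevel sets of `u` compact, and Pogorelov's
maximum principle there, with `(p-1)`-plurisubharmonicity controlling the coefficients in the
directions of small eigenvalues, bounds `D²u` on all of `ℝⁿ`. The equation is then uniformly
elliptic, and by concavity every deficit `sup u_ee - u_ee` is a nonnegative supersolution. By the
growth lemma of Krylov and Safonov such a supersolution is small on most of a large ball as soon as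
it is small at the centre, so the deficits of all directions of an orthonormal basis are small at a
common point. Hence `Δu` attains, up to any error, the sum of the suprema; the support property then
forces `Δu`, and with it every `u_ee`, to be constant.
-/

section Calculus

variable {E F : Type*} [NormedAddCommGroup E] [NormedSpace ℝ E] [NormedAddCommGroup F]
  [NormedSpace ℝ F] {g : E → F} {u v : E → ℝ} {m k : WithTop ℕ∞}

/-- The derivative of `g` in the direction `a`, as a function of the base point. -/
def dirDeriv (a : E) (g : E → F) : E → F := fun x => fderiv ℝ g x a

/-- The Hessian of `u` at `x`, as a bilinear form. -/
def hessian (u : E → ℝ) (x : E) : E →L[ℝ] E →L[ℝ] ℝ := fderiv ℝ (fderiv ℝ u) x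

lemma contDiff_dirDeriv (hg : ContDiff ℝ m g) (hk : k + 1 ≤ m) (a : E) :
    ContDiff ℝ k (dirDeriv a g) :=
  (hg.fderiv_right hk).clm_apply contDiff_const

lemma differentiable_fderiv (hu : ContDiff ℝ 2 u) : Differentiable ℝ (fderiv ℝ u) :=
  (hu.fderiv_right (m := 1) (by norm_num)).differentiable (by norm_num)

lemma contDiff_hessian (hu : ContDiff ℝ m u) (hk : k + 1 + 1 ≤ m) : ContDiff ℝ k (hessian u) :=
  (hu.fderiv_right hk).fderiv_right le_rfl

lemma contDiff_hessian_apply (hu : ContDiff ℝ m u) (hk : k + 1 + 1 ≤ m) (a b : E) :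
    ContDiff ℝ k (fun x => hessian u x a b) :=
  ((contDiff_hessian hu hk).clm_apply contDiff_const).clm_apply contDiff_const

lemma dirDeriv_apply_apply {B : E → E →L[ℝ] E →L[ℝ] ℝ} (hB : Differentiable ℝ B) (a b c x : E) :
    dirDeriv a B x b c = dirDeriv a (fun y => B y b c) x := by
  unfold dirDeriv
  rw [fderiv_clm_apply ((hB x).clm_apply (differentiableAt_const b)) (differentiableAt_const c),
    fderiv_clm_apply (hB x) (differentiableAt_const b)]
  simp

lemma hessian_apply (hu : ContDiff ℝ 2 u) (x a b : E) :
    hessian u x a b = dirDeriv a (dirDeriv b u) x := by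
  unfold hessian dirDeriv
  rw [fderiv_clm_apply (differentiable_fderiv hu x) (by fun_prop)]
  simp

lemma hessian_comm (hu : ContDiff ℝ 2 u) (x a b : E) : hessian u x a b = hessian u x b a :=
  (hu.contDiffAt.isSymmSndFDerivAt (by simp)) a b

lemma dirDeriv_comm (hu : ContDiff ℝ 2 u) (a b : E) :
    dirDeriv a (dirDeriv b u) = dirDeriv b (dirDeriv a u) := by
  funext x
  rw [← hessian_apply hu, ← hessian_apply hu, hessian_comm hu]

lemma dirDeriv_hessian_comm (hu : ContDiff ℝ 3 u) (a b c : E) :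
    dirDeriv c (fun y => hessian u y a b) = dirDeriv a (fun y => hessian u y c b) := by
  have hu₂ : ContDiff ℝ 2 u := hu.of_le (by norm_num)
  simp only [hessian_apply hu₂]
  exact dirDeriv_comm (contDiff_dirDeriv hu (by norm_num) b) c a

lemma hessian_hessian_comm (hu : ContDiff ℝ 4 u) (x a b : E) :
    hessian (fun y => hessian u y b b) x a a = hessian (fun y => hessian u y a a) x b b := by
  have hu₃ : ContDiff ℝ 3 u := hu.of_le (by norm_num)
  have hess (c : E) : ContDiff ℝ 2 (fun y => hessian u y c c) :=
    contDiff_hessian_apply hu (by norm_num) c c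
  have mixed : dirDeriv a (fun y => hessian u y b b) = dirDeriv b (fun y => hessian u y b a) := by
    rw [dirDeriv_hessian_comm hu₃ b b a]
    simp only [hessian_comm (hu.of_le (by norm_num)) _ a b]
  rw [hessian_apply (hess b), hessian_apply (hess a), mixed,
    dirDeriv_comm (contDiff_hessian_apply hu (by norm_num) b a),
    dirDeriv_hessian_comm hu₃ a a b]

lemma hasDerivAt_add_smul (x e : E) (t : ℝ) : HasDerivAt (fun t : ℝ => x + t • e) e t := by
  simpa using ((hasDerivAt_id t).smul_const e).const_add x

lemma hasDerivAt_comp_add_smul (hg : Differentiable ℝ g) (x e : E) (t : ℝ) :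
    HasDerivAt (fun t : ℝ => g (x + t • e)) (dirDeriv e g (x + t • e)) t :=
  (hg (x + t • e)).hasFDerivAt.comp_hasDerivAt t (hasDerivAt_add_smul x e t)

lemma hasDerivAt_dirDeriv_add_smul (hu : ContDiff ℝ 2 u) (x e : E) (t : ℝ) :
    HasDerivAt (fun t : ℝ => dirDeriv e u (x + t • e)) (hessian u (x + t • e) e e) t := by
  rw [hessian_apply hu]
  exact hasDerivAt_comp_add_smul
    ((contDiff_dirDeriv (k := 1) hu (by norm_num) e).differentiable (by norm_num)) x e t

lemma hasDerivAt_apply_apply {B : ℝ → E →L[ℝ] E →L[ℝ] ℝ} {B' : E →L[ℝ] E →L[ℝ] ℝ}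
    {V W : ℝ → E} {V' W' : E} {t : ℝ} (hB : HasDerivAt B B' t) (hV : HasDerivAt V V' t)
    (hW : HasDerivAt W W' t) :
    HasDerivAt (fun t => B t (V t) (W t)) (B' (V t) (W t) + B t V' (W t) + B t (V t) W') t := by
  simpa using (hB.clm_apply hV).clm_apply hW

lemma second_deriv_nonneg_of_isLocalMin {f f' : ℝ → ℝ} {c t₀ : ℝ}
    (hf : ∀ᶠ t in nhds t₀, HasDerivAt f (f' t) t) (hf' : HasDerivAt f' c t₀)
    (hmin : IsLocalMin f t₀) : 0 ≤ c := by
  by_contra! hc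
  have hderiv : deriv f =ᶠ[nhds t₀] f' := hf.mono fun t ht => ht.deriv
  have hderiv₂ : deriv (deriv f) t₀ = c := by rw [hderiv.deriv_eq, hf'.deriv]
  have hmax : IsLocalMax f t₀ :=
    isLocalMax_of_deriv_deriv_neg (hderiv₂.trans_lt hc) hmin.deriv_eq_zero
      hf.self_of_nhds.continuousAt
  have hconst : f =ᶠ[nhds t₀] fun _ => f t₀ := by
    filter_upwards [hmin, hmax] with t h₁ h₂ using le_antisymm h₂ h₁
  have : deriv (deriv f) t₀ = 0 := by rw [hconst.deriv.deriv_eq]; simp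
  linarith

lemma hessian_nonneg_of_isLocalMin (hu : ContDiff ℝ 2 u) {x : E} (hx : IsLocalMin u x) (e : E) :
    0 ≤ hessian u x e e := by
  have hline : Filter.Tendsto (fun t : ℝ => x + t • e) (nhds 0) (nhds x) := by
    simpa using (hasDerivAt_add_smul x e 0).continuousAt.tendsto
  have hmin : IsLocalMin (fun t : ℝ => u (x + t • e)) 0 := by
    simpa [IsLocalMin, IsMinFilter] using hline.eventually hx
  simpa using second_deriv_nonneg_of_isLocalMin
    (.of_forall (hasDerivAt_comp_add_smul (hu.differentiable (by norm_num)) x e))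
    (hasDerivAt_dirDeriv_add_smul hu x e 0) hmin

lemma hessian_sub (hu : ContDiff ℝ 2 u) (hv : ContDiff ℝ 2 v) (x : E) :
    hessian (fun y => u y - v y) x = hessian u x - hessian v x := by
  have h : fderiv ℝ (fun y => u y - v y) = fun y => fderiv ℝ u y - fderiv ℝ v y :=
    funext fun y => fderiv_fun_sub (hu.differentiable (by norm_num) y)
      (hv.differentiable (by norm_num) y)
  rw [hessian, h, fderiv_fun_sub (differentiable_fderiv hu x) (differentiable_fderiv hv x)]
  rfl

lemma hessian_const_mul (hu : ContDiff ℝ 2 u) (c : ℝ) (x : E) :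
    hessian (fun y => c * u y) x = c • hessian u x := by
  have h : fderiv ℝ (fun y => c * u y) = fun y => c • fderiv ℝ u y :=
    funext fun y => fderiv_const_mul (hu.differentiable (by norm_num) y) c
  rw [hessian, h, fderiv_fun_const_smul (differentiable_fderiv hu x)]
  rfl

lemma hessian_sum {ι : Type*} {s : Finset ι} {v : ι → E → ℝ} (hv : ∀ i ∈ s, ContDiff ℝ 2 (v i))
    (x : E) : hessian (fun y => ∑ i ∈ s, v i y) x = ∑ i ∈ s, hessian (v i) x := by
  have h : fderiv ℝ (fun y => ∑ i ∈ s, v i y) = fun y => ∑ i ∈ s, fderiv ℝ (v i) y :=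
    funext fun y => fderiv_fun_sum fun i hi => (hv i hi).differentiable (by norm_num) y
  rw [hessian, h, fderiv_fun_sum fun i hi => differentiable_fderiv (hv i hi) x]
  rfl

@[simp]
lemma hessian_const (c : ℝ) (x : E) : hessian (fun _ => c) x = 0 := by
  simp [hessian]

@[simp]
lemma hessian_clm (L : E →L[ℝ] ℝ) (x : E) : hessian L x = 0 := by
  have h : fderiv ℝ L = fun _ => L := funext fun y => L.fderiv
  simp [hessian, h]

lemma hessian_comp_add_smul (hu : ContDiff ℝ 2 u) (x₀ : E) (d : ℝ) (x : E) :
    hessian (fun z => u (x₀ + d • z)) x = d ^ 2 • hessian u (x₀ + d • x) := by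
  have hA (z : E) : HasFDerivAt (fun z : E => x₀ + d • z) (d • ContinuousLinearMap.id ℝ E) z :=
    ((hasFDerivAt_id z).const_smul d).const_add x₀
  have h : fderiv ℝ (fun z => u (x₀ + d • z)) = fun z => d • fderiv ℝ u (x₀ + d • z) := by
    funext z
    have hu' := (hu.differentiable (by norm_num) (x₀ + d • z)).hasFDerivAt
    refine (hu'.comp z (hA z)).fderiv.trans ?_
    ext; simp
  have h₂ := (((differentiable_fderiv hu (x₀ + d • x)).hasFDerivAt.comp x (hA x)).const_smul
    d).fderiv
  rw [hessian, h]
  refine h₂.trans ?_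
  ext a b
  simp [hessian]
  ring

end Calculus

section Barrier

open scoped RealInnerProductSpace

variable {E : Type*} [NormedAddCommGroup E]

/-- The barrier `(‖x‖² + 1/2)^(-q)`: for large `q` it is a strict subsolution of every
sufficiently elliptic operator outside the unit ball. The shift `1/2` removes the singularity. -/
def barrier (q : ℕ) (x : E) : ℝ := ((‖x‖ ^ 2 + 1 / 2) ^ q)⁻¹

lemma barrier_pos (q : ℕ) (x : E) : 0 < barrier q x := by
  unfold barrier; positivity

lemma barrier_le (q : ℕ) (x : E) : barrier q x ≤ 2 ^ q := by
  rw [barrier, ← inv_pow]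
  refine pow_le_pow_left₀ (by positivity) ?_ q
  rw [inv_le_comm₀ (by positivity) (by norm_num)]
  linarith [sq_nonneg ‖x‖]

lemma le_barrier (q : ℕ) {x : E} (hx : ‖x‖ ≤ 1) : ((3 / 2 : ℝ) ^ q)⁻¹ ≤ barrier q x :=
  inv_anti₀ (by positivity)
    (pow_le_pow_left₀ (by positivity) (by nlinarith [norm_nonneg x]) q)

lemma barrier_succ (q : ℕ) (x : E) : barrier q x = barrier (q + 1) x * (‖x‖ ^ 2 + 1 / 2) := by
  have hx : ‖x‖ ^ 2 + 1 / 2 ≠ 0 := by positivity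
  rw [barrier, barrier, pow_succ (_ + _) q, mul_inv, inv_mul_cancel_right₀ hx]

variable [InnerProductSpace ℝ E]

lemma contDiff_barrier {m : WithTop ℕ∞} (q : ℕ) : ContDiff ℝ m (barrier q : E → ℝ) :=
  (((contDiff_norm_sq ℝ).add contDiff_const).pow q).inv fun x => by positivity

lemma dirDeriv_barrier (q : ℕ) (e : E) :
    dirDeriv e (barrier q) = fun x => -(2 * q * ⟪x, e⟫ * barrier (q + 1) x) := by
  funext x
  have hline := hasDerivAt_comp_add_smul
    ((contDiff_barrier (m := 1) q).differentiable (by norm_num)) x e 0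
  simp only [zero_smul, add_zero] at hline
  have hnorm : HasDerivAt (fun t : ℝ => ‖x + t • e‖ ^ 2 + 1 / 2) (2 * ⟪x, e⟫) 0 := by
    simpa using ((hasDerivAt_add_smul x e 0).norm_sq).add_const (1 / 2)
  refine hline.unique (((hnorm.pow q).inv (by simp only [Pi.pow_apply]; positivity)).congr_deriv ?_)
  rcases q with _ | q
  · simp
  · simp only [barrier, zero_smul, add_zero, Nat.add_sub_cancel, Pi.pow_apply]
    field_simp
    ring

lemma hessian_barrier (q : ℕ) (x e : E) :
    hessian (barrier q) x e e = -(2 * q * ‖e‖ ^ 2 * barrier (q + 1) x) +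
      4 * q * (q + 1) * ⟪x, e⟫ ^ 2 * barrier (q + 2) x := by
  have hline := hasDerivAt_dirDeriv_add_smul (contDiff_barrier q) x e 0
  have hline' := hasDerivAt_comp_add_smul
    ((contDiff_barrier (m := 1) (q + 1)).differentiable (by norm_num)) x e 0
  have hinner : HasDerivAt (fun t : ℝ => ⟪x + t • e, e⟫) (‖e‖ ^ 2) 0 := by
    simpa using (hasDerivAt_add_smul x e 0).inner ℝ (hasDerivAt_const (0 : ℝ) e)
  simp only [dirDeriv_barrier, zero_smul, add_zero] at hline hline'
  refine hline.unique (((hinner.const_mul (2 * (q : ℝ))).mul hline').neg.congr_deriv ?_)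
  simp only [zero_smul, add_zero]
  push_cast
  ring

end Barrier

section EllipticSupersolution

open scoped RealInnerProductSpace Laplacian

variable {ι : Type*} [Fintype ι] {E : Type*} [NormedAddCommGroup E] [InnerProductSpace ℝ E]
  {l L : ℝ}

/-- `w` is a supersolution of some linear operator `w ↦ tr (A(x) D²w)` whose coefficient matrix,
diagonal with entries `a i` in the orthonormal basis `b`, satisfies `l ≤ A(x) ≤ L`. No regularity
of `A` in `x` is assumed. -/
def IsEllipticSupersolution (ι : Type*) [Fintype ι] (l L : ℝ) (w : E → ℝ) : Prop :=
  ∀ x, ∃ (b : OrthonormalBasis ι ℝ E) (a : ι → ℝ),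
    (∀ i, l ≤ a i ∧ a i ≤ L) ∧ ∑ i, a i * hessian w x (b i) (b i) ≤ 0

lemma laplacian_eq_sum_hessian [FiniteDimensional ℝ E] (u : E → ℝ) (x : E)
    (b : OrthonormalBasis ι ℝ E) : (Δ u) x = ∑ i, hessian u x (b i) (b i) := by
  rw [InnerProductSpace.laplacian_eq_iteratedFDeriv_orthonormalBasis u b]
  simp [iteratedFDeriv_two_apply, hessian]

lemma sum_mul_hessian_barrier (q : ℕ) (x : E) (b : OrthonormalBasis ι ℝ E) (a : ι → ℝ) :
    ∑ i, a i * hessian (barrier q) x (b i) (b i) = -(2 * q * barrier (q + 1) x) * ∑ i, a i +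
      4 * q * (q + 1) * barrier (q + 2) x * ∑ i, a i * ⟪x, b i⟫ ^ 2 := by
  rw [Finset.mul_sum, Finset.mul_sum, ← Finset.sum_add_distrib]
  refine Finset.sum_congr rfl fun i _ => ?_
  rw [hessian_barrier, b.norm_eq_one]
  ring

section Coefficients

variable {b : OrthonormalBasis ι ℝ E} {a : ι → ℝ} (ha : ∀ i, l ≤ a i ∧ a i ≤ L)
include ha

lemma sum_coeff_le : ∑ i, a i ≤ Fintype.card ι * L := by
  simpa using Finset.sum_le_sum fun i (_ : i ∈ Finset.univ) => (ha i).2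

lemma mul_sq_norm_le_sum_coeff (x : E) : l * ‖x‖ ^ 2 ≤ ∑ i, a i * ⟪x, b i⟫ ^ 2 := by
  have hpars : ∑ i, ⟪x, b i⟫ ^ 2 = ‖x‖ ^ 2 := by simpa using b.sum_sq_norm_inner_left x
  rw [← hpars, Finset.mul_sum]
  exact Finset.sum_le_sum fun i _ => mul_le_mul_of_nonneg_right (ha i).1 (sq_nonneg _)

lemma le_sum_mul_hessian_barrier (q : ℕ) (x : E) :
    2 * q * barrier (q + 2) x *
        (2 * (q + 1) * l * ‖x‖ ^ 2 - Fintype.card ι * L * (‖x‖ ^ 2 + 1 / 2)) ≤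
      ∑ i, a i * hessian (barrier q) x (b i) (b i) := by
  have hq := barrier_pos (q + 2) x
  have h₁ : 2 * q * barrier (q + 1) x * ∑ i, a i ≤
      2 * q * barrier (q + 1) x * (Fintype.card ι * L) := by
    have := barrier_pos (q + 1) x
    exact mul_le_mul_of_nonneg_left (sum_coeff_le ha) (by positivity)
  have h₂ : 4 * q * (q + 1) * barrier (q + 2) x * (l * ‖x‖ ^ 2) ≤
      4 * q * (q + 1) * barrier (q + 2) x * ∑ i, a i * ⟪x, b i⟫ ^ 2 :=
    mul_le_mul_of_nonneg_left (mul_sq_norm_le_sum_coeff ha x) (by positivity)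
  rw [sum_mul_hessian_barrier]
  rw [barrier_succ (q + 1)] at h₁ ⊢
  linarith

lemma neg_le_sum_mul_hessian_barrier (hl : 0 ≤ l) (hL : 0 ≤ L) (q : ℕ) (x : E) :
    -(2 * q * 2 ^ (q + 1) * (Fintype.card ι * L)) ≤
      ∑ i, a i * hessian (barrier q) x (b i) (b i) := by
  have hq₁ := barrier_pos (q + 1) x
  have hq₂ := barrier_pos (q + 2) x
  have h₁ : 2 * q * barrier (q + 1) x * ∑ i, a i ≤ 2 * q * 2 ^ (q + 1) * (Fintype.card ι * L) :=
    calc 2 * q * barrier (q + 1) x * ∑ i, a i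
        ≤ 2 * q * barrier (q + 1) x * (Fintype.card ι * L) :=
          mul_le_mul_of_nonneg_left (sum_coeff_le ha) (by positivity)
      _ ≤ 2 * q * 2 ^ (q + 1) * (Fintype.card ι * L) := by
          gcongr
          exact barrier_le _ x
  have h₂ : 0 ≤ 4 * q * (q + 1) * barrier (q + 2) x * ∑ i, a i * ⟪x, b i⟫ ^ 2 :=
    mul_nonneg (by positivity)
      ((mul_nonneg hl (sq_nonneg _)).trans (mul_sq_norm_le_sum_coeff ha x))
  rw [sum_mul_hessian_barrier]
  linarith

lemma sum_mul_hessian_barrier_pos (hl : 0 < l) {q : ℕ} (hq₀ : 0 < q)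
    (hq : Fintype.card ι * L ≤ q * l) {x : E} (hx : 1 ≤ ‖x‖) :
    0 < ∑ i, a i * hessian (barrier q) x (b i) (b i) := by
  refine lt_of_lt_of_le ?_ (le_sum_mul_hessian_barrier ha q x)
  have hx' : 1 ≤ ‖x‖ ^ 2 := one_le_pow₀ hx
  have hq₀' : (0 : ℝ) < q := by exact_mod_cast hq₀
  have hgap : 0 < 2 * (q + 1) * l * ‖x‖ ^ 2 - Fintype.card ι * L * (‖x‖ ^ 2 + 1 / 2) := by
    have h₁ := mul_le_mul_of_nonneg_right hq (show 0 ≤ ‖x‖ ^ 2 + 1 / 2 by positivity)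
    have h₂ := mul_le_mul_of_nonneg_left hx' (mul_pos hq₀' hl).le
    have h₃ : 0 < l * ‖x‖ ^ 2 := by positivity
    have h₄ := mul_pos hq₀' hl
    linarith
  have := barrier_pos (q + 2) x
  positivity

end Coefficients
end EllipticSupersolution

section Contact

open MeasureTheory Module
open scoped RealInnerProductSpace Laplacian ENNReal

variable {ι : Type*} [Fintype ι] {E : Type*} [NormedAddCommGroup E] [InnerProductSpace ℝ E]

/-- The inverse of the Riesz isomorphism, as a linear map (`InnerProductSpace.toDual` is typed as
conjugate-linear). It turns the differential of a function into its gradient. -/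
def ofDual [CompleteSpace E] : StrongDual ℝ E →L[ℝ] E :=
  (InnerProductSpace.toDual ℝ E).symm.toContinuousLinearEquiv.toContinuousLinearMap

@[simp]
lemma inner_ofDual [CompleteSpace E] (φ : StrongDual ℝ E) (v : E) : ⟪ofDual φ, v⟫ = φ v := by
  simp [ofDual]

variable [FiniteDimensional ℝ E]

lemma abs_det_le_trace_pow {T : E →ₗ[ℝ] E} (hT : T.IsPositive) :
    |LinearMap.det T| ≤ LinearMap.trace ℝ E T ^ finrank ℝ E := by
  have hnonneg := hT.nonneg_eigenvalues rfl
  have hdet := hT.isSymmetric.det_eq_prod_eigenvalues rfl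
  have htrace := hT.isSymmetric.trace_eq_sum_eigenvalues rfl
  simp only [RCLike.ofReal_real_eq_id, id_eq] at hdet htrace
  rw [hdet, htrace, abs_of_nonneg (Finset.prod_nonneg fun i _ => hnonneg i)]
  calc ∏ i, hT.isSymmetric.eigenvalues rfl i
      ≤ ∏ _i : Fin (finrank ℝ E), ∑ j, hT.isSymmetric.eigenvalues rfl j :=
        Finset.prod_le_prod (fun i _ => hnonneg i) fun i hi =>
          Finset.single_le_sum (fun j _ => hnonneg j) hi
    _ = (∑ j, hT.isSymmetric.eigenvalues rfl j) ^ finrank ℝ E := by simp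

lemma abs_det_ofDual_comp_hessian_le [CompleteSpace E] {u : E → ℝ} (hu : ContDiff ℝ 2 u) {x : E}
    (hx : ∀ e, 0 ≤ hessian u x e e) :
    |(ofDual ∘L hessian u x).det| ≤ (Δ u) x ^ finrank ℝ E := by
  have hpos : (ofDual ∘L hessian u x : E →ₗ[ℝ] E).IsPositive := by
    refine ⟨fun v v' => ?_, fun v => ?_⟩
    · change ⟪ofDual (hessian u x v), v'⟫ = ⟪v, ofDual (hessian u x v')⟫
      rw [real_inner_comm _ v, inner_ofDual, inner_ofDual, hessian_comm hu]
    · simpa using hx v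
  refine (abs_det_le_trace_pow hpos).trans_eq ?_
  rw [LinearMap.trace_eq_sum_inner _ (stdOrthonormalBasis ℝ E),
    laplacian_eq_sum_hessian u x (stdOrthonormalBasis ℝ E)]
  congr 1
  exact Finset.sum_congr rfl fun i _ => by rw [real_inner_comm]; simp

variable {l L A : ℝ} {q : ℕ} {w : E → ℝ}

lemma exists_isLocalMin_sub_barrier_sub_inner (hw : Continuous w) (hw₀ : ∀ x, 0 ≤ w x)
    (hA : 0 ≤ A) (hA₅ : 5 ≤ A * (((3 / 2 : ℝ) ^ q)⁻¹ - ((9 / 2 : ℝ) ^ q)⁻¹))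
    {y z : E} (hy : ‖y‖ ≤ 1) (hwy : w y ≤ 1) (hz : ‖z‖ < 1) :
    ∃ x, w x ≤ A * 2 ^ q + 4 ∧ IsLocalMin (fun x => w x - A * barrier q x - ⟪z, x⟫) x := by
  set g : E → ℝ := fun x => w x - A * barrier q x - ⟪z, x⟫ with hg
  have hbarrier : Continuous (barrier (E := E) q) := (contDiff_barrier (m := 0) q).continuous
  have hcont : Continuous g := (hw.sub (continuous_const.mul hbarrier)).sub
    (continuous_const.inner continuous_id)
  obtain ⟨x, hx, hmin⟩ := (isCompact_closedBall (0 : E) 2).exists_isMinOn ⟨0, by simp⟩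
    hcont.continuousOn
  have hx₂ : ‖x‖ ≤ 2 := by simpa using hx
  have hzx : ⟪z, x⟫ ≤ ‖x‖ :=
    (real_inner_le_norm z x).trans (mul_le_of_le_one_left (norm_nonneg x) hz.le)
  have hgx : g x ≤ 2 - A * ((3 / 2 : ℝ) ^ q)⁻¹ :=
    calc g x ≤ g y := hmin (by simpa using hy.trans one_le_two)
      _ ≤ 2 - A * ((3 / 2 : ℝ) ^ q)⁻¹ := by
        have hzy : -⟪z, y⟫ ≤ 1 := (neg_le_abs _).trans
          ((abs_real_inner_le_norm z y).trans (mul_le_one₀ hz.le (norm_nonneg y) hy))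
        linarith [mul_le_mul_of_nonneg_left (le_barrier q hy) hA]
  have hlt : ‖x‖ < 2 := by
    refine hx₂.lt_of_ne fun hx_eq => ?_
    have hbar : barrier q x = ((9 / 2 : ℝ) ^ q)⁻¹ := by rw [barrier, hx_eq]; norm_num
    simp only [hg, hbar] at hgx
    linarith [hw₀ x]
  refine ⟨x, ?_, hmin.isLocalMin
    (Filter.mem_of_superset (Metric.isOpen_ball.mem_nhds (by simpa using hlt))
      Metric.ball_subset_closedBall)⟩
  simp only [hg] at hgx
  have : 0 ≤ A * ((3 / 2 : ℝ) ^ q)⁻¹ := by positivity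
  linarith [mul_le_mul_of_nonneg_left (barrier_le q x) hA]

lemma norm_lt_one_and_laplacian_le_of_contact (hl : 0 < l) (hlL : l ≤ L) (hq₀ : 0 < q)
    (hq : Fintype.card ι * L ≤ q * l) (hA : 0 < A) (hw : ContDiff ℝ 2 w)
    (hsuper : IsEllipticSupersolution ι l L w) {x : E}
    (hx : ∀ e, 0 ≤ hessian (fun y => w y - A * barrier q y) x e e) :
    ‖x‖ < 1 ∧ (Δ fun y => w y - A * barrier q y) x ≤
      A * (2 * q * 2 ^ (q + 1) * (Fintype.card ι * L)) / l := by
  obtain ⟨b, a, ha, hwb⟩ := hsuper x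
  set W : E → ℝ := fun y => w y - A * barrier q y with hW
  have hbar : ContDiff ℝ 2 (barrier q : E → ℝ) := contDiff_barrier q
  have hsum : ∑ i, a i * hessian W x (b i) (b i) = ∑ i, a i * hessian w x (b i) (b i) -
      A * ∑ i, a i * hessian (barrier q) x (b i) (b i) := by
    rw [hW, hessian_sub hw (contDiff_const.mul hbar), hessian_const_mul hbar, Finset.mul_sum,
      ← Finset.sum_sub_distrib]
    refine Finset.sum_congr rfl fun i _ => ?_
    simp only [sub_apply, smul_apply, smul_eq_mul]
    ring
  have hlap : l * (Δ W) x ≤ -(A * ∑ i, a i * hessian (barrier q) x (b i) (b i)) :=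
    calc l * (Δ W) x = ∑ i, l * hessian W x (b i) (b i) := by
          rw [laplacian_eq_sum_hessian W x b, Finset.mul_sum]
      _ ≤ ∑ i, a i * hessian W x (b i) (b i) :=
          Finset.sum_le_sum fun i _ => mul_le_mul_of_nonneg_right (ha i).1 (hx _)
      _ ≤ -(A * ∑ i, a i * hessian (barrier q) x (b i) (b i)) := by linarith
  have hlap₀ : 0 ≤ l * (Δ W) x := by
    rw [laplacian_eq_sum_hessian W x b]
    exact mul_nonneg hl.le (Finset.sum_nonneg fun i _ => hx _)
  refine ⟨not_le.1 fun hx₁ => ?_, (le_div_iff₀' hl).2 (hlap.trans ?_)⟩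
  · linarith [mul_pos hA (sum_mul_hessian_barrier_pos (b := b) ha hl hq₀ hq hx₁)]
  · linarith [mul_le_mul_of_nonneg_left
      (neg_le_sum_mul_hessian_barrier (b := b) ha hl.le (hl.le.trans hlL) q x) hA.le]

lemma exists_contact (hl : 0 < l) (hlL : l ≤ L) (hq₀ : 0 < q)
    (hq : Fintype.card ι * L ≤ q * l) (hA : 0 < A)
    (hA₅ : 5 ≤ A * (((3 / 2 : ℝ) ^ q)⁻¹ - ((9 / 2 : ℝ) ^ q)⁻¹)) (hw : ContDiff ℝ 2 w)
    (hw₀ : ∀ x, 0 ≤ w x) (hsuper : IsEllipticSupersolution ι l L w)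
    {y z : E} (hy : ‖y‖ ≤ 1) (hwy : w y ≤ 1) (hz : ‖z‖ < 1) :
    ∃ x, ‖x‖ < 1 ∧ w x ≤ A * 2 ^ q + 4 ∧
      fderiv ℝ (fun y => w y - A * barrier q y) x = innerSL ℝ z ∧
      (∀ e, 0 ≤ hessian (fun y => w y - A * barrier q y) x e e) ∧
      (Δ fun y => w y - A * barrier q y) x ≤
        A * (2 * q * 2 ^ (q + 1) * (Fintype.card ι * L)) / l := by
  obtain ⟨x, hwx, hmin⟩ :=
    exists_isLocalMin_sub_barrier_sub_inner hw.continuous hw₀ hA.le hA₅ hy hwy hz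
  set W : E → ℝ := fun y => w y - A * barrier q y
  have hW : ContDiff ℝ 2 W := hw.sub (contDiff_const.mul (contDiff_barrier q))
  have hinner : ContDiff ℝ 2 (innerSL ℝ z : E → ℝ) := (innerSL ℝ z).contDiff
  have hhess (e : E) : 0 ≤ hessian W x e e := by
    have := hessian_nonneg_of_isLocalMin (hW.sub hinner) hmin e
    simpa only [hessian_sub hW hinner, hessian_clm, sub_apply, zero_apply, sub_zero] using this
  obtain ⟨hx, hlap⟩ :=
    norm_lt_one_and_laplacian_le_of_contact hl hlL hq₀ hq hA hw hsuper hhess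
  have hfderiv := hmin.fderiv_eq_zero
  change fderiv ℝ (fun y => W y - innerSL ℝ z y) x = 0 at hfderiv
  rw [fderiv_fun_sub (hW.differentiable (by norm_num) x) (innerSL ℝ z).differentiableAt,
    ContinuousLinearMap.fderiv, sub_eq_zero] at hfderiv
  exact ⟨x, hx, hwx, hfderiv, hhess, hlap⟩

variable [MeasurableSpace E] [BorelSpace E] (μ : Measure E) [μ.IsAddHaarMeasure]

/- The area formula for the gradient map of `W`; at the points considered its Jacobian
determinant is at most the `n`-th power of the Laplacian. -/
lemma measure_le_mul_of_forall_exists_fderiv_eq {W : E → ℝ} (hW : ContDiff ℝ 2 W) {S D : Set E}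
    (hD : MeasurableSet D) {k : ℝ}
    (h : ∀ z ∈ S, ∃ x ∈ D, fderiv ℝ W x = innerSL ℝ z ∧ (∀ e, 0 ≤ hessian W x e e) ∧ (Δ W) x ≤ k) :
    μ S ≤ ENNReal.ofReal (k ^ finrank ℝ E) * μ D := by
  have := FiniteDimensional.complete ℝ E
  have hcont : Continuous fun x => |(ofDual ∘L hessian W x).det| :=
    (ContinuousLinearMap.continuous_det.comp
      (continuous_const.clm_comp (contDiff_hessian (k := 0) hW (by norm_num)).continuous)).abs
  set D' := D ∩ {x | |(ofDual ∘L hessian W x).det| ≤ k ^ finrank ℝ E}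
  have hD' : MeasurableSet D' := hD.inter (isClosed_le hcont continuous_const).measurableSet
  have hsub : S ⊆ (fun x => ofDual (fderiv ℝ W x)) '' D' := fun z hz => by
    obtain ⟨x, hxD, hgrad, hhess, hlap⟩ := h z hz
    have hlap₀ : 0 ≤ (Δ W) x := by
      rw [laplacian_eq_sum_hessian W x (stdOrthonormalBasis ℝ E)]
      exact Finset.sum_nonneg fun i _ => hhess _
    refine ⟨x, ⟨hxD, (abs_det_ofDual_comp_hessian_le hW hhess).trans ?_⟩, ?_⟩
    · exact pow_le_pow_left₀ hlap₀ hlap _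
    · exact ext_inner_right ℝ fun v => by simp [hgrad]
  calc μ S ≤ μ ((fun x => ofDual (fderiv ℝ W x)) '' D') := measure_mono hsub
    _ ≤ ∫⁻ x in D', ENNReal.ofReal |(ofDual ∘L hessian W x).det| ∂μ :=
        addHaar_image_le_lintegral_abs_det_fderiv μ hD' fun x _ =>
          (ofDual.hasFDerivAt.comp x (differentiable_fderiv hW x).hasFDerivAt).hasFDerivWithinAt
    _ ≤ ∫⁻ _x in D', ENNReal.ofReal (k ^ finrank ℝ E) ∂μ :=
        setLIntegral_mono measurable_const fun x hx => ENNReal.ofReal_le_ofReal hx.2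
    _ ≤ ENNReal.ofReal (k ^ finrank ℝ E) * μ D := by
        rw [setLIntegral_const]
        gcongr
        exact Set.inter_subset_left

lemma IsEllipticSupersolution.const_mul_comp_add_smul {E : Type*} [NormedAddCommGroup E]
    [InnerProductSpace ℝ E] {w : E → ℝ} (hsuper : IsEllipticSupersolution ι l L w)
    (hw : ContDiff ℝ 2 w) {c : ℝ} (hc : 0 ≤ c) (x₀ : E) (d : ℝ) :
    IsEllipticSupersolution ι l L fun z => c * w (x₀ + d • z) := by
  intro z
  obtain ⟨b, a, ha, hsum⟩ := hsuper (x₀ + d • z)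
  refine ⟨b, a, ha, ?_⟩
  have hw' : ContDiff ℝ 2 fun z => w (x₀ + d • z) :=
    hw.comp (contDiff_const.add (contDiff_id.const_smul d))
  calc ∑ i, a i * hessian (fun z => c * w (x₀ + d • z)) z (b i) (b i)
      = c * d ^ 2 * ∑ i, a i * hessian w (x₀ + d • z) (b i) (b i) := by
        rw [hessian_const_mul hw', hessian_comp_add_smul hw, Finset.mul_sum]
        refine Finset.sum_congr rfl fun i _ => ?_
        simp only [smul_apply, smul_eq_mul]
        ring
    _ ≤ 0 := mul_nonpos_of_nonneg_of_nonpos (by positivity) hsum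

/-- The conclusion of the Krylov–Safonov growth lemma, as a property of the function `w`: if `w`
is at most `η` at some point of a closed ball, then `w ≤ C η` on a portion of it of measure at
least `1 / K`. -/
def SublevelGrowth (μ : Measure E) (C : ℝ) (K : ℝ≥0∞) (w : E → ℝ) : Prop :=
  ∀ ⦃x₀ y : E⦄ ⦃d η : ℝ⦄, 0 < d → 0 < η → dist y x₀ ≤ d → w y ≤ η →
    μ (Metric.ball x₀ d) ≤ K * μ ({x | w x ≤ C * η} ∩ Metric.ball x₀ d)

lemma exists_measure_ball_le_mul (ι : Type*) [Fintype ι] (hl : 0 < l) (hlL : l ≤ L) :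
    ∃ C : ℝ, 1 ≤ C ∧ ∃ K : ℝ≥0∞, K ≠ ∞ ∧ ∀ w : E → ℝ, ContDiff ℝ 2 w → (∀ x, 0 ≤ w x) →
      IsEllipticSupersolution ι l L w → ∀ y : E, ‖y‖ ≤ 1 → w y ≤ 1 →
        μ (Metric.ball 0 1) ≤ K * μ ({x | w x ≤ C} ∩ Metric.ball 0 1) := by
  obtain ⟨q, hq₀, hq⟩ : ∃ q : ℕ, 0 < q ∧ Fintype.card ι * L ≤ q * l := by
    obtain ⟨q, hq⟩ := exists_nat_ge (Fintype.card ι * L / l)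
    refine ⟨q + 1, q.succ_pos, (div_le_iff₀ hl).1 (hq.trans ?_)⟩
    exact_mod_cast q.le_succ
  have hgap : 0 < ((3 / 2 : ℝ) ^ q)⁻¹ - ((9 / 2 : ℝ) ^ q)⁻¹ :=
    sub_pos.2 (inv_strictAnti₀ (by positivity)
      (pow_lt_pow_left₀ (by norm_num) (by norm_num) hq₀.ne'))
  obtain ⟨A, hA, hA₅⟩ : ∃ A : ℝ, 0 < A ∧ 5 ≤ A * (((3 / 2 : ℝ) ^ q)⁻¹ - ((9 / 2 : ℝ) ^ q)⁻¹) :=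
    ⟨5 / _, div_pos (by norm_num) hgap, (div_mul_cancel₀ _ hgap.ne').ge⟩
  refine ⟨A * 2 ^ q + 4, by linarith [show 0 < A * 2 ^ q by positivity],
    ENNReal.ofReal ((A * (2 * q * 2 ^ (q + 1) * (Fintype.card ι * L)) / l) ^ finrank ℝ E),
    ENNReal.ofReal_ne_top, fun w hw hw₀ hsuper y hy hwy => ?_⟩
  refine measure_le_mul_of_forall_exists_fderiv_eq μ (W := fun x => w x - A * barrier q x)
    (hw.sub (contDiff_const.mul (contDiff_barrier q)))
    ((isClosed_le hw.continuous continuous_const).measurableSet.inter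
      Metric.isOpen_ball.measurableSet) fun z hz => ?_
  obtain ⟨x, hx, hwx, hfderiv, hhess, hlap⟩ := exists_contact hl hlL hq₀ hq hA hA₅ hw hw₀ hsuper
    hy hwy (mem_ball_zero_iff.1 hz)
  exact ⟨x, ⟨hwx, mem_ball_zero_iff.2 hx⟩, hfderiv, hhess, hlap⟩

lemma measure_preimage_add_smul (x₀ : E) {d : ℝ} (hd : d ≠ 0) (s : Set E) :
    μ ((fun z => x₀ + d • z) ⁻¹' s) = ENNReal.ofReal |(d ^ finrank ℝ E)⁻¹| * μ s := by
  rw [← measure_preimage_add μ x₀ s, ← Measure.addHaar_preimage_smul μ hd]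
  rfl

lemma exists_sublevelGrowth (ι : Type*) [Fintype ι] (hl : 0 < l) (hlL : l ≤ L) :
    ∃ C : ℝ, 1 ≤ C ∧ ∃ K : ℝ≥0∞, K ≠ ∞ ∧ ∀ w : E → ℝ, ContDiff ℝ 2 w → (∀ x, 0 ≤ w x) →
      IsEllipticSupersolution ι l L w → SublevelGrowth μ C K w := by
  obtain ⟨C, hC, K, hK, h⟩ := exists_measure_ball_le_mul μ ι hl hlL
  refine ⟨C, hC, K, hK, fun w hw hw₀ hsuper x₀ y d η hd hη hy hwy => ?_⟩
  have hball : (fun z => x₀ + d • z) ⁻¹' Metric.ball x₀ d = Metric.ball 0 1 := by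
    ext z
    simp [norm_smul, abs_of_pos hd, hd]
  have hlevel : (fun z => x₀ + d • z) ⁻¹' {x | w x ≤ C * η} =
      {z | η⁻¹ * w (x₀ + d • z) ≤ C} := by
    ext z
    simp [inv_mul_le_iff₀ hη, mul_comm C]
  have hscaled := h (fun z => η⁻¹ * w (x₀ + d • z))
    (contDiff_const.mul (hw.comp (contDiff_const.add (contDiff_id.const_smul d))))
    (fun z => mul_nonneg (by positivity) (hw₀ _))
    (hsuper.const_mul_comp_add_smul hw (by positivity) x₀ d) (d⁻¹ • (y - x₀)) ?_ ?_
  · rw [← hlevel, ← hball, ← Set.preimage_inter, measure_preimage_add_smul μ x₀ hd.ne',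
      measure_preimage_add_smul μ x₀ hd.ne', mul_left_comm] at hscaled
    exact (ENNReal.mul_le_mul_iff_right (by simpa using pow_pos (abs_pos.2 hd.ne') _)
      ENNReal.ofReal_ne_top).1 hscaled
  · rwa [norm_smul, norm_inv, Real.norm_of_nonneg hd.le, ← dist_eq_norm, inv_mul_le_iff₀ hd,
      mul_one]
  · rwa [smul_inv_smul₀ hd.ne', add_sub_cancel, inv_mul_le_iff₀ hη, mul_one]

end Contact

section SublevelGrowth

open MeasureTheory Module
open scoped ENNReal

variable {E : Type*} [NormedAddCommGroup E] [NormedSpace ℝ E] [FiniteDimensional ℝ E]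

lemma exists_countable_disjoint_ball_infDist {S t : Set E} (hS : IsClosed S) (hSne : S.Nonempty)
    (ht : Disjoint t S) {M : ℝ} (hM : ∀ x ∈ t, Metric.infDist x S ≤ M) :
    ∃ v ⊆ t, v.Countable ∧ v.PairwiseDisjoint (fun a => Metric.ball a (Metric.infDist a S)) ∧
      t ⊆ ⋃ a ∈ v, Metric.closedBall a (5 * Metric.infDist a S) := by
  have hpos : ∀ x ∈ t, 0 < Metric.infDist x S := fun x hx =>
    (hS.notMem_iff_infDist_pos hSne).1 (Set.disjoint_left.1 ht hx)
  obtain ⟨v, hv, hdisj, hcover⟩ :=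
    Vitali.exists_disjoint_subfamily_covering_enlargement_closedBall
      t (fun x => x) (fun x => Metric.infDist x S) M hM 5 (by norm_num)
  refine ⟨v, hv, hdisj.countable_of_nonempty_interior fun a ha => ?_,
    hdisj.mono_on fun a _ => Metric.ball_subset_closedBall, fun x hx => ?_⟩
  · exact (Metric.nonempty_ball.2 (hpos a (hv ha))).mono Metric.ball_subset_interior_closedBall
  · obtain ⟨a, ha, hxa⟩ := hcover x hx
    exact Set.mem_biUnion ha (hxa (Metric.mem_closedBall_self (hpos x hx).le))

variable [MeasurableSpace E] [BorelSpace E] {μ : Measure E} [μ.IsAddHaarMeasure]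
  {C η R : ℝ} {K : ℝ≥0∞} {w : E → ℝ} {y : E}

namespace SublevelGrowth

lemma measure_closedBall_le (hgrowth : SublevelGrowth μ C K w) {d : ℝ} (hd : 0 < d) (hη : 0 < η)
    {a : E} (hya : dist y a ≤ d) (hwy : w y ≤ η) :
    μ (Metric.closedBall a (5 * d)) ≤
      ENNReal.ofReal (5 ^ finrank ℝ E) * (K * μ ({x | w x ≤ C * η} ∩ Metric.ball a d)) := by
  rw [Measure.addHaar_closedBall _ _ (by positivity), mul_pow, ENNReal.ofReal_mul (by positivity),
    mul_assoc, ← Measure.addHaar_ball_of_pos μ a hd]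
  gcongr
  exact hgrowth hd hη hya hwy

lemma measure_ball_diff_le (hgrowth : SublevelGrowth μ C K w) (hw : Continuous w) (hη : 0 < η)
    (hy : ‖y‖ ≤ R) (hwy : w y ≤ η) :
    μ (Metric.ball 0 R \ {x | w x ≤ η}) ≤ ENNReal.ofReal (5 ^ finrank ℝ E) *
      (K * μ (({x | w x ≤ C * η} \ {x | w x ≤ η}) ∩ Metric.closedBall 0 (3 * R))) := by
  set S := {x | w x ≤ η}
  have hS : IsClosed S := isClosed_le hw continuous_const
  have hSne : S.Nonempty := ⟨y, hwy⟩
  set r : E → ℝ := fun x => Metric.infDist x S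
  have hr_le : ∀ x ∈ Metric.ball 0 R \ S, r x ≤ 2 * R := fun x hx =>
    calc r x ≤ dist x y := Metric.infDist_le_dist_of_mem hwy
      _ ≤ ‖x‖ + ‖y‖ := dist_le_norm_add_norm x y
      _ ≤ 2 * R := by linarith [mem_ball_zero_iff.1 hx.1]
  obtain ⟨v, hv, hv_count, hdisj, hcover⟩ :=
    exists_countable_disjoint_ball_infDist hS hSne disjoint_sdiff_self_left hr_le
  have hball : ∀ a ∈ v, {x | w x ≤ C * η} ∩ Metric.ball a (r a) ⊆
      ({x | w x ≤ C * η} \ S) ∩ Metric.closedBall 0 (3 * R) := by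
    refine fun a ha x hx => ⟨⟨hx.1, fun hxS => ?_⟩, mem_closedBall_zero_iff.2 ?_⟩
    · exact (Metric.mem_ball'.1 hx.2).not_ge (Metric.infDist_le_dist_of_mem hxS)
    · linarith [mem_ball_zero_iff.1 (hv ha).1, mem_ball_iff_norm.1 hx.2, hr_le a (hv ha),
        norm_le_norm_add_norm_sub' x a]
  have : Countable v := hv_count
  calc μ (Metric.ball 0 R \ S) ≤ μ (⋃ a ∈ v, Metric.closedBall a (5 * r a)) :=
        measure_mono hcover
    _ ≤ ∑' a : v, μ (Metric.closedBall (a : E) (5 * r a)) := measure_biUnion_le μ hv_count _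
    _ ≤ ∑' a : v, ENNReal.ofReal (5 ^ finrank ℝ E) *
          (K * μ ({x | w x ≤ C * η} ∩ Metric.ball (a : E) (r a))) :=
        ENNReal.tsum_le_tsum fun a => by
          obtain ⟨z, hz, hdist⟩ := hS.exists_infDist_eq_dist hSne (a : E)
          exact hgrowth.measure_closedBall_le ((hS.notMem_iff_infDist_pos hSne).1 (hv a.2).2) hη
            (by rw [dist_comm, ← hdist]) hz
    _ = ENNReal.ofReal (5 ^ finrank ℝ E) *
          (K * μ (⋃ a ∈ v, {x | w x ≤ C * η} ∩ Metric.ball a (r a))) := by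
        rw [ENNReal.tsum_mul_left, ENNReal.tsum_mul_left, measure_biUnion hv_count]
        · exact hdisj.mono_on fun a _ => Set.inter_subset_right
        · exact fun a _ => (isClosed_le hw continuous_const).measurableSet.inter measurableSet_ball
    _ ≤ _ := by
        gcongr
        exact Set.iUnion₂_subset hball

/- Consecutive level sets `{C^k η < w ≤ C^(k+1) η}`, `k < m`, are disjoint, so the estimates
`measure_ball_diff_le` at the levels `C^k η` can be summed. -/
lemma natCast_mul_measure_ball_diff_le (hgrowth : SublevelGrowth μ C K w) (hw : Continuous w)
    (hC : 1 ≤ C) (hη : 0 < η) (hR : 0 ≤ R) (hy : ‖y‖ ≤ R) (hwy : w y ≤ η) (m : ℕ) :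
    m * μ (Metric.ball 0 R \ {x | w x ≤ C ^ m * η}) ≤
      ENNReal.ofReal (15 ^ finrank ℝ E) * (K * μ (Metric.closedBall 0 R)) := by
  have : 0 < C := one_pos.trans_le hC
  set A : ℕ → Set E := fun k => {x | w x ≤ C ^ k * η}
  have hA_mono : Monotone A := fun i j hij x hx =>
    le_trans hx (mul_le_mul_of_nonneg_right (pow_le_pow_right₀ hC hij) hη.le)
  have hA_meas (k : ℕ) : MeasurableSet (A k) := (isClosed_le hw continuous_const).measurableSet
  have hlevel : ∀ k ∈ Finset.range m, μ (Metric.ball 0 R \ A m) ≤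
      ENNReal.ofReal (5 ^ finrank ℝ E) *
        (K * μ ((A (k + 1) \ A k) ∩ Metric.closedBall 0 (3 * R))) := by
    intro k hk
    have h := hgrowth.measure_ball_diff_le hw (η := C ^ k * η) (by positivity) hy
      (hwy.trans (le_mul_of_one_le_left hη.le (one_le_pow₀ hC)))
    rw [← mul_assoc C, ← pow_succ'] at h
    exact (measure_mono (Set.sdiff_subset_sdiff_right (hA_mono (Finset.mem_range.1 hk).le))).trans h
  have hsum : ∑ k ∈ Finset.range m, μ ((A (k + 1) \ A k) ∩ Metric.closedBall 0 (3 * R)) ≤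
      μ (Metric.closedBall 0 (3 * R)) := by
    rw [← measure_biUnion_finset]
    · exact measure_mono (Set.iUnion₂_subset fun k _ => Set.inter_subset_right)
    · intro i hi j hj hij
      wlog hlt : i < j generalizing i j
      · exact (this hj hi hij.symm (hij.lt_or_gt.resolve_left hlt)).symm
      · exact Set.disjoint_left.2 fun x hx hx' =>
          hx'.1.2 (hA_mono (Nat.succ_le_of_lt hlt) hx.1.1)
    · exact fun k _ => ((hA_meas _).diff (hA_meas _)).inter measurableSet_closedBall
  calc m * μ (Metric.ball 0 R \ A m) = ∑ _k ∈ Finset.range m, μ (Metric.ball 0 R \ A m) := by simp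
    _ ≤ ENNReal.ofReal (5 ^ finrank ℝ E) *
          (K * ∑ k ∈ Finset.range m, μ ((A (k + 1) \ A k) ∩ Metric.closedBall 0 (3 * R))) := by
        rw [Finset.mul_sum, Finset.mul_sum]
        exact Finset.sum_le_sum hlevel
    _ ≤ ENNReal.ofReal (5 ^ finrank ℝ E) * (K * μ (Metric.closedBall 0 (3 * R))) := by gcongr
    _ = ENNReal.ofReal (15 ^ finrank ℝ E) * (K * μ (Metric.closedBall 0 R)) := by
        rw [Measure.addHaar_closedBall_mul μ 0 (by norm_num) hR, mul_left_comm K, ← mul_assoc,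
          ← ENNReal.ofReal_mul (by positivity), ← mul_pow]
        norm_num

end SublevelGrowth

lemma exists_forall_le_of_sublevelGrowth {κ : Type*} [Finite κ] {w : κ → E → ℝ}
    (hgrowth : ∀ i, SublevelGrowth μ C K (w i)) (hC : 1 ≤ C) (hK : K ≠ ∞)
    (hw : ∀ i, Continuous (w i)) (hinf : ∀ i, ∀ η > 0, ∃ x, w i x ≤ η) {δ : ℝ} (hδ : 0 < δ) :
    ∃ x, ∀ i, w i x ≤ δ := by
  have := Fintype.ofFinite κ
  have : 0 < C := one_pos.trans_le hC
  obtain ⟨m, hm⟩ := ENNReal.exists_nat_gt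
    (ENNReal.mul_ne_top (ENNReal.natCast_ne_top (Fintype.card κ))
      (ENNReal.mul_ne_top (ENNReal.ofReal_ne_top (r := 15 ^ finrank ℝ E)) hK))
  choose y hy using fun i => hinf i (δ / C ^ m) (by positivity)
  obtain ⟨R, hR, hyR⟩ : ∃ R > 0, ∀ i, ‖y i‖ ≤ R :=
    ⟨1 + ∑ i, ‖y i‖, by positivity, fun i => le_add_of_nonneg_of_le zero_le_one
      (Finset.single_le_sum (f := fun i => ‖y i‖) (fun j _ => norm_nonneg _) (Finset.mem_univ i))⟩
  by_contra! hne
  have hcover : Metric.ball (0 : E) R ⊆ ⋃ i, Metric.ball 0 R \ {x | w i x ≤ δ} := fun x hx => by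
    obtain ⟨i, hi⟩ := hne x
    exact Set.mem_iUnion.2 ⟨i, hx, hi.not_ge⟩
  have hle (i : κ) : m * μ (Metric.ball 0 R \ {x | w i x ≤ δ}) ≤
      ENNReal.ofReal (15 ^ finrank ℝ E) * (K * μ (Metric.closedBall 0 R)) := by
    have h := (hgrowth i).natCast_mul_measure_ball_diff_le (hw i) hC (by positivity) hR.le (hyR i)
      (hy i) m
    rwa [mul_div_cancel₀ δ (by positivity)] at h
  have hμR : μ (Metric.closedBall (0 : E) R) = μ (Metric.ball 0 R) := by
    rw [Measure.addHaar_closedBall μ 0 hR.le, Measure.addHaar_ball_of_pos μ 0 hR]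
  refine (ENNReal.mul_lt_mul_left (Metric.measure_ball_pos μ (0 : E) hR).ne'
    measure_ball_lt_top.ne hm).not_ge ?_
  calc m * μ (Metric.ball 0 R) ≤ m * ∑ i, μ (Metric.ball 0 R \ {x | w i x ≤ δ}) := by
        gcongr
        exact (measure_mono hcover).trans (measure_iUnion_fintype_le _ _)
    _ ≤ ∑ _i : κ, ENNReal.ofReal (15 ^ finrank ℝ E) * (K * μ (Metric.closedBall 0 R)) := by
        rw [Finset.mul_sum]
        exact Finset.sum_le_sum fun i _ => hle i
    _ = Fintype.card κ * (ENNReal.ofReal (15 ^ finrank ℝ E) * K) * μ (Metric.ball 0 R) := by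
        rw [Finset.sum_const, Finset.card_univ, nsmul_eq_mul, hμR]
        ring

end SublevelGrowth

section EllipticSupport

open MeasureTheory Module
open scoped Laplacian

variable {ι : Type*} [Fintype ι] {E : Type*} [NormedAddCommGroup E] [InnerProductSpace ℝ E]
  {u : E → ℝ} {l L : ℝ}

/-- At every `x` there is a linear functional `H ↦ tr (A H)`, with `l ≤ A ≤ L`, that attains its
minimum over the set of all Hessians `D²u(y)` at `D²u(x)`. Solutions of an equation `F(D²u) = c`
with `F` concave and uniformly elliptic have this property, with `A = DF(D²u(x))`. As in
`IsEllipticSupersolution`, `A` is recorded by an orthonormal eigenbasis and its eigenvalues. -/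
def HasEllipticSupport (ι : Type*) [Fintype ι] (l L : ℝ) (u : E → ℝ) : Prop :=
  ∀ x, ∃ (b : OrthonormalBasis ι ℝ E) (a : ι → ℝ), (∀ i, l ≤ a i ∧ a i ≤ L) ∧
    ∀ y, ∑ i, a i * hessian u x (b i) (b i) ≤ ∑ i, a i * hessian u y (b i) (b i)

namespace HasEllipticSupport

lemma le [Nonempty ι] (hsupp : HasEllipticSupport ι l L u) : l ≤ L := by
  obtain ⟨b, a, ha, -⟩ := hsupp 0
  obtain ⟨hl, hL⟩ := ha (Classical.arbitrary ι)
  exact hl.trans hL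

lemma isEllipticSupersolution (hsupp : HasEllipticSupport ι l L u) (hu : ContDiff ℝ 4 u)
    (S : ℝ) (e : E) : IsEllipticSupersolution ι l L (fun x => S - hessian u x e e) := by
  intro x
  obtain ⟨b, a, ha, hmin⟩ := hsupp x
  have hess (e : E) : ContDiff ℝ 2 (fun y => hessian u y e e) :=
    contDiff_hessian_apply hu (by norm_num) e e
  have hess_mul (i : ι) : ContDiff ℝ 2 (fun y => a i * hessian u y (b i) (b i)) :=
    contDiff_const.mul (hess (b i))
  have hmin_test : 0 ≤ ∑ i, a i * hessian (fun y => hessian u y e e) x (b i) (b i) := by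
    have h := hessian_nonneg_of_isLocalMin (ContDiff.sum fun i _ => hess_mul i)
      (Filter.Eventually.of_forall hmin) e
    rw [hessian_sum fun i _ => hess_mul i] at h
    simp only [hessian_const_mul (hess _), _root_.sum_apply,
      _root_.smul_apply, smul_eq_mul] at h
    simpa only [hessian_hessian_comm hu x _ e] using h
  refine ⟨b, a, ha, ?_⟩
  simpa [hessian_sub contDiff_const (hess e)] using hmin_test

variable [FiniteDimensional ℝ E]

lemma exists_forall_sub_hessian_le (hsupp : HasEllipticSupport ι l L u) (hu : ContDiff ℝ 4 u)
    (hl : 0 < l) (hlL : l ≤ L) {κ : Type*} [Finite κ] {e : κ → E} {S : κ → ℝ}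
    (hS : ∀ i, IsLUB (Set.range fun x => hessian u x (e i) (e i)) (S i)) {δ : ℝ} (hδ : 0 < δ) :
    ∃ x, ∀ i, S i - hessian u x (e i) (e i) ≤ δ := by
  borelize E
  obtain ⟨C, hC, K, hK, hgrowth⟩ := exists_sublevelGrowth (volume : Measure E) ι hl hlL
  have hdeficit (i : κ) : ContDiff ℝ 2 fun x => S i - hessian u x (e i) (e i) :=
    contDiff_const.sub (contDiff_hessian_apply hu (by norm_num) _ _)
  refine exists_forall_le_of_sublevelGrowth (fun i => hgrowth _ (hdeficit i)
    (fun x => sub_nonneg.2 ((hS i).1 ⟨x, rfl⟩)) (hsupp.isEllipticSupersolution hu _ _))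
    hC hK (fun i => (hdeficit i).continuous) (fun i η hη => ?_) hδ
  obtain ⟨_, ⟨x, rfl⟩, hx, -⟩ := (hS i).exists_between (sub_lt_self (S i) hη)
  exact ⟨x, by linarith⟩

lemma isLUB_range_laplacian (hsupp : HasEllipticSupport ι l L u) (hu : ContDiff ℝ 4 u)
    (hl : 0 < l) (hlL : l ≤ L) {b : OrthonormalBasis ι ℝ E} {S : ι → ℝ}
    (hS : ∀ i, IsLUB (Set.range fun x => hessian u x (b i) (b i)) (S i)) :
    IsLUB (Set.range (Δ u)) (∑ i, S i) := by
  refine ⟨?_, fun τ hτ => le_of_forall_pos_le_add fun ε hε => ?_⟩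
  · rintro _ ⟨x, rfl⟩
    rw [laplacian_eq_sum_hessian u x b]
    exact Finset.sum_le_sum fun i _ => (hS i).1 ⟨x, rfl⟩
  · obtain ⟨x, hx⟩ := hsupp.exists_forall_sub_hessian_le hu hl hlL hS
      (show 0 < ε / (Fintype.card ι + 1) by positivity)
    calc ∑ i, S i ≤ ∑ i, (hessian u x (b i) (b i) + ε / (Fintype.card ι + 1)) :=
          Finset.sum_le_sum fun i _ => by linarith [hx i]
      _ = (Δ u) x + Fintype.card ι * (ε / (Fintype.card ι + 1)) := by
          simp [Finset.sum_add_distrib, laplacian_eq_sum_hessian u x b]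
      _ ≤ τ + ε := by
          refine add_le_add (hτ ⟨x, rfl⟩) ?_
          rw [mul_div_assoc', div_le_iff₀ (by positivity)]
          linarith

/- Near the supremum of `Δu` the support functional is almost maximal among all `D²u(y)`; since it
is also minimal there, it is almost constant, and so is `Δu`. -/
lemma laplacian_eq_of_isLUB (hsupp : HasEllipticSupport ι l L u) (hu : ContDiff ℝ 4 u)
    (hl : 0 < l) (hlL : l ≤ L) (hbdd : ∀ e, BddAbove (Set.range fun x => hessian u x e e))
    {τ : ℝ} (hτ : IsLUB (Set.range (Δ u)) τ) (x : E) : (Δ u) x = τ := by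
  have hL : 0 < L := hl.trans_le hlL
  refine le_antisymm (hτ.1 ⟨x, rfl⟩) (le_of_forall_pos_le_add fun ε hε => ?_)
  obtain ⟨_, ⟨z, rfl⟩, hz, -⟩ :=
    hτ.exists_between (sub_lt_self τ (show 0 < l * ε / L by positivity))
  obtain ⟨b, a, ha, hmin⟩ := hsupp z
  set S : ι → ℝ := fun i => ⨆ y, hessian u y (b i) (b i)
  have hS (i : ι) : IsLUB (Set.range fun y => hessian u y (b i) (b i)) (S i) :=
    isLUB_ciSup (hbdd (b i))
  have hsum (y : E) : ∑ i, (S i - hessian u y (b i) (b i)) = τ - (Δ u) y := by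
    rw [Finset.sum_sub_distrib, ← laplacian_eq_sum_hessian u y b,
      (hsupp.isLUB_range_laplacian hu hl hlL hS).unique hτ]
  have hdeficit (y : E) (i : ι) : 0 ≤ S i - hessian u y (b i) (b i) :=
    sub_nonneg.2 ((hS i).1 ⟨y, rfl⟩)
  have hcompare : l * (τ - (Δ u) x) ≤ L * (τ - (Δ u) z) :=
    calc l * (τ - (Δ u) x) = ∑ i, l * (S i - hessian u x (b i) (b i)) := by
          rw [← hsum, Finset.mul_sum]
      _ ≤ ∑ i, a i * (S i - hessian u x (b i) (b i)) :=
          Finset.sum_le_sum fun i _ => mul_le_mul_of_nonneg_right (ha i).1 (hdeficit x i)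
      _ ≤ ∑ i, a i * (S i - hessian u z (b i) (b i)) := by
          simp only [mul_sub, Finset.sum_sub_distrib]
          linarith [hmin x]
      _ ≤ ∑ i, L * (S i - hessian u z (b i) (b i)) :=
          Finset.sum_le_sum fun i _ => mul_le_mul_of_nonneg_right (ha i).2 (hdeficit z i)
      _ = L * (τ - (Δ u) z) := by rw [← hsum, Finset.mul_sum]
  have hclose : L * (τ - (Δ u) z) ≤ L * (l * ε / L) :=
    mul_le_mul_of_nonneg_left (by linarith) hL.le
  rw [mul_div_cancel₀ _ hL.ne'] at hclose
  linarith [le_of_mul_le_mul_left (hcompare.trans hclose) hl]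

end HasEllipticSupport

lemma exists_orthonormalBasis_apply_eq [FiniteDimensional ℝ E] (hι : finrank ℝ E = Fintype.card ι)
    {e : E} (he : ‖e‖ = 1) : ∃ (b : OrthonormalBasis ι ℝ E) (i : ι), b i = e := by
  have : Nontrivial E := ⟨e, 0, norm_ne_zero_iff.1 (by simp [he])⟩
  obtain ⟨i⟩ : Nonempty ι := Fintype.card_pos_iff.1 (hι ▸ finrank_pos)
  have hv : Orthonormal ℝ (({i} : Set ι).domRestrict fun _ => e) :=
    ⟨fun _ => he, fun j k hjk => absurd (Subsingleton.elim j k) hjk⟩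
  obtain ⟨b, hb⟩ := hv.exists_orthonormalBasis_extension_of_card_eq hι
  exact ⟨b, i, hb i rfl⟩

lemma HasEllipticSupport.hessian_apply_self_eq [FiniteDimensional ℝ E]
    (hsupp : HasEllipticSupport ι l L u) (hu : ContDiff ℝ 4 u) (hl : 0 < l) (hlL : l ≤ L)
    (hbdd : ∀ e, BddAbove (Set.range fun x => hessian u x e e)) (x y e : E) :
    hessian u x e e = hessian u y e e := by
  suffices hunit : ∀ e : E, ‖e‖ = 1 → ∀ x, hessian u x e e = ⨆ y, hessian u y e e by
    rcases eq_or_ne e 0 with rfl | he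
    · simp
    · have hne : ‖e‖ ≠ 0 := norm_ne_zero_iff.2 he
      have h := (hunit (‖e‖⁻¹ • e) (norm_smul_inv_norm he) x).trans
        (hunit (‖e‖⁻¹ • e) (norm_smul_inv_norm he) y).symm
      simpa [hne] using h
  intro e he x
  obtain ⟨b₀, -⟩ := hsupp 0
  obtain ⟨b, i, rfl⟩ := exists_orthonormalBasis_apply_eq (finrank_eq_card_basis b₀.toBasis) he
  have hS (j : ι) := isLUB_ciSup (hbdd (b j))
  have hlap := hsupp.laplacian_eq_of_isLUB hu hl hlL hbdd
    (hsupp.isLUB_range_laplacian hu hl hlL hS) x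
  rw [laplacian_eq_sum_hessian u x b] at hlap
  exact (Finset.sum_eq_sum_iff_of_le fun j _ => (hS j).1 ⟨x, rfl⟩).1 hlap i (Finset.mem_univ i)

end EllipticSupport

section Quadratic

lemma eq_quadratic_of_hessian_eq {E : Type*} [NormedAddCommGroup E] [NormedSpace ℝ E] {u : E → ℝ}
    (hu : ContDiff ℝ 2 u) (h : ∀ x e, hessian u x e e = hessian u 0 e e) (x : E) :
    u x = u 0 + dirDeriv x u 0 + 1 / 2 * hessian u 0 x x := by
  have hslope (t : ℝ) : dirDeriv x u (0 + t • x) = dirDeriv x u 0 + t * hessian u 0 x x := by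
    have hd (t : ℝ) :
        HasDerivAt (fun t : ℝ => dirDeriv x u (0 + t • x) - t * hessian u 0 x x) 0 t :=
      ((hasDerivAt_dirDeriv_add_smul hu 0 x t).sub
        ((hasDerivAt_id t).mul_const _)).congr_deriv (by rw [h]; ring)
    have := is_const_of_deriv_eq_zero (fun t => (hd t).differentiableAt) (fun t => (hd t).deriv) t 0
    simp only [zero_smul, zero_mul, add_zero, sub_zero] at this
    linarith
  have hd (t : ℝ) : HasDerivAt (fun t : ℝ =>
      u (0 + t • x) - (t * dirDeriv x u 0 + t ^ 2 / 2 * hessian u 0 x x)) 0 t :=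
    ((hasDerivAt_comp_add_smul (hu.differentiable (by norm_num)) 0 x t).sub
      (((hasDerivAt_id t).mul_const (dirDeriv x u 0)).add
        ((((hasDerivAt_id t).pow 2).div_const 2).mul_const (hessian u 0 x x)))).congr_deriv
      (by rw [hslope]; simp)
  have := is_const_of_deriv_eq_zero (fun t => (hd t).differentiableAt) (fun t => (hd t).deriv) 1 0
  simp only [one_smul, zero_smul, add_zero, zero_add, one_mul, one_pow, zero_mul, ne_eq,
    OfNat.ofNat_ne_zero, not_false_eq_true, zero_pow, zero_div, sub_zero] at this
  linarith

variable {n : ℕ} {u : EuclideanSpace ℝ (Fin n) → ℝ}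

lemma hessianMatrix_apply (u : EuclideanSpace ℝ (Fin n) → ℝ) (x : EuclideanSpace ℝ (Fin n))
    (i j : Fin n) : hessianMatrix u x i j =
      hessian u x (EuclideanSpace.single i 1) (EuclideanSpace.single j 1) := by
  simp [hessianMatrix, iteratedFDeriv_two_apply, hessian]

lemma hessian_eq_dotProduct_mulVec (x a c : EuclideanSpace ℝ (Fin n)) :
    hessian u x a c = dotProduct (a : Fin n → ℝ) ((hessianMatrix u x).mulVec c) := by
  conv_lhs => rw [← (EuclideanSpace.basisFun (Fin n) ℝ).sum_repr a,
    ← (EuclideanSpace.basisFun (Fin n) ℝ).sum_repr c]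
  simp only [map_sum, map_smul, _root_.sum_apply, _root_.smul_apply,
    smul_eq_mul, Matrix.mulVec, dotProduct, hessianMatrix_apply, EuclideanSpace.basisFun_repr,
    EuclideanSpace.basisFun_apply, Finset.mul_sum]
  rw [Finset.sum_comm]
  exact Finset.sum_congr rfl fun i _ => Finset.sum_congr rfl fun j _ => by ring

lemma isQuadraticPolynomial_of_hessian_eq (hu : ContDiff ℝ 2 u)
    (h : ∀ x e, hessian u x e e = hessian u 0 e e) : IsQuadraticPolynomial u := by
  refine ⟨hessianMatrix u 0, fun i => dirDeriv (EuclideanSpace.single i 1) u 0, u 0, ?_,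
    fun x => ?_⟩
  · ext i j
    simp only [Matrix.transpose_apply, hessianMatrix_apply, hessian_comm hu 0]
  · have hquad : ∑ i, ∑ j, hessianMatrix u 0 i j * x i * x j = hessian u 0 x x := by
      simp only [hessian_eq_dotProduct_mulVec, dotProduct, Matrix.mulVec, Finset.mul_sum]
      exact Finset.sum_congr rfl fun i _ => Finset.sum_congr rfl fun j _ => by ring
    have hlin : ∑ i, dirDeriv (EuclideanSpace.single i 1) u 0 * x i = dirDeriv x u 0 := by
      conv_rhs => rw [dirDeriv, ← (EuclideanSpace.basisFun (Fin n) ℝ).sum_repr x]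
      simp [dirDeriv, mul_comm]
    rw [hquad, hlin, eq_quadratic_of_hessian_eq hu h x]
    ring

end Quadratic

section Eigenframe

open scoped RealInnerProductSpace

variable {ι : Type*} [Fintype ι] {E : Type*} [NormedAddCommGroup E] [InnerProductSpace ℝ E]
  {B : E →L[ℝ] E →L[ℝ] ℝ} {b : OrthonormalBasis ι ℝ E} {lam : ι → ℝ}

/-- The orthonormal basis `b` diagonalises the bilinear form `B`, with eigenvalues `lam`. -/
def IsEigenframe (B : E →L[ℝ] E →L[ℝ] ℝ) (b : OrthonormalBasis ι ℝ E) (lam : ι → ℝ) : Prop :=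
  ∀ i v, B (b i) v = lam i * ⟪b i, v⟫

namespace IsEigenframe

lemma apply_eq_sum (h : IsEigenframe B b lam) (v w : E) :
    B v w = ∑ i, ⟪b i, v⟫ * (lam i * ⟪b i, w⟫) := by
  conv_lhs => rw [← b.sum_repr' v]
  simp only [map_sum, map_smul, _root_.sum_apply, _root_.smul_apply, smul_eq_mul, h _ w]

lemma apply_self_eq_sum (h : IsEigenframe B b lam) (v : E) :
    B v v = ∑ i, ⟪b i, v⟫ ^ 2 * lam i := by
  rw [h.apply_eq_sum]
  exact Finset.sum_congr rfl fun i _ => by ring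

lemma apply_basis_self (h : IsEigenframe B b lam) (i : ι) : B (b i) (b i) = lam i := by
  simp [h i, b.norm_eq_one]

lemma apply_self_le (h : IsEigenframe B b lam) {m : ι} (hm : ∀ i, lam i ≤ lam m) (v : E) :
    B v v ≤ lam m * ‖v‖ ^ 2 :=
  calc B v v = ∑ i, ⟪b i, v⟫ ^ 2 * lam i := h.apply_self_eq_sum v
    _ ≤ ∑ i, ⟪b i, v⟫ ^ 2 * lam m :=
        Finset.sum_le_sum fun i _ => mul_le_mul_of_nonneg_left (hm i) (sq_nonneg _)
    _ = lam m * ‖v‖ ^ 2 := by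
        rw [← Finset.sum_mul, ← b.sum_sq_norm_inner_right v, mul_comm]
        simp only [Real.norm_eq_abs, sq_abs]

/- Schur–Horn: the squared inner products of two orthonormal bases form a doubly stochastic matrix,
which Birkhoff's theorem writes as a convex combination of permutation matrices. -/
lemma exists_apply_basis_eq_sum_perm [DecidableEq ι] (h : IsEigenframe B b lam)
    (c : OrthonormalBasis ι ℝ E) : ∃ w : Equiv.Perm ι → ℝ, (∀ σ, 0 ≤ w σ) ∧ ∑ σ, w σ = 1 ∧
      ∀ i, B (c i) (c i) = ∑ σ, w σ * lam (σ i) := by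
  set M : Matrix ι ι ℝ := .of fun i k => ⟪b k, c i⟫ ^ 2 with hM
  have hMd : M ∈ doublyStochastic ℝ ι := by
    refine mem_doublyStochastic_iff_sum.2 ⟨fun i j => sq_nonneg _, fun i => ?_, fun k => ?_⟩
    · simpa [hM] using b.sum_sq_norm_inner_right (c i)
    · simpa [hM] using c.sum_sq_norm_inner_left (b k)
  obtain ⟨w, hw0, hw1, hwM⟩ := exists_eq_sum_perm_of_mem_doublyStochastic hMd
  refine ⟨w, hw0, hw1, fun i => ?_⟩
  have hdiag : B (c i) (c i) = (M.mulVec lam) i := h.apply_self_eq_sum (c i)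
  rw [hdiag, ← hwM, Matrix.sum_mulVec, Finset.sum_apply]
  exact Finset.sum_congr rfl fun σ _ => by
    simp [Matrix.smul_mulVec, Equiv.Perm.permMatrix, PEquiv.toMatrix_toPEquiv_mulVec]

end IsEigenframe

lemma exists_isEigenframe_hessian {n : ℕ} {u : EuclideanSpace ℝ (Fin n) → ℝ} (hu : ContDiff ℝ 2 u)
    (x : EuclideanSpace ℝ (Fin n)) :
    ∃ b : OrthonormalBasis (Fin n) ℝ (EuclideanSpace ℝ (Fin n)),
      IsEigenframe (hessian u x) b (hessEigen u x) := by
  have hherm : (hessianMatrix u x).IsHermitian := by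
    ext i j
    simp only [Matrix.conjTranspose_apply, star_trivial, hessianMatrix_apply, hessian_comm hu x]
  refine ⟨hherm.eigenvectorBasis, fun i v => ?_⟩
  rw [hessian_comm hu, hessian_eq_dotProduct_mulVec, hherm.mulVec_eigenvectorBasis, hessEigen,
    dif_pos hherm]
  simp only [dotProduct, Pi.smul_apply, smul_eq_mul, PiLp.inner_apply, RCLike.inner_apply,
    conj_trivial, Finset.mul_sum]
  exact Finset.sum_congr rfl fun k _ => by ring

end Eigenframe

section PMongeAmpere

variable {n p : ℕ} {lam mu : Fin n → ℝ}

/-- The `p`-element subsets of `{1, …, n}`, which index the factors of `M_p`. -/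
abbrev pSubsets (n p : ℕ) : Finset (Finset (Fin n)) := Finset.univ.powersetCard p

lemma mem_pSubsets {s : Finset (Fin n)} : s ∈ pSubsets n p ↔ s.card = p := by
  simp [Finset.mem_powersetCard]

lemma exists_mem_pSubsets (hp : p ≠ 0) (hpn : p ≤ n) (i : Fin n) : ∃ s ∈ pSubsets n p, i ∈ s := by
  obtain ⟨s, his, hs⟩ := Finset.exists_superset_card_eq (s := {i}) (n := p)
    (by simpa using Nat.one_le_iff_ne_zero.2 hp) (by simpa using hpn)
  exact ⟨s, mem_pSubsets.2 hs, his (Finset.mem_singleton_self i)⟩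

lemma map_mem_pSubsets (σ : Equiv.Perm (Fin n)) (s : Finset (Fin n)) :
    s ∈ pSubsets n p ↔ σ.finsetCongr s ∈ pSubsets n p := by
  simp [Equiv.finsetCongr_apply]

lemma ne_zero_of_mem_gammaHat (h : lam ∈ GammaHat n p) : p ≠ 0 := by
  rintro rfl
  simpa using h ∅ rfl

lemma gammaHat_subset_succ (n p : ℕ) : GammaHat n p ⊆ GammaHat n (p + 1) := by
  intro lam h s hs
  have hmean : ∑ i ∈ s, ∑ j ∈ s.erase i, lam j = p * ∑ j ∈ s, lam j := by
    have herase : ∀ i ∈ s, ∑ j ∈ s.erase i, lam j = ∑ j ∈ s, lam j - lam i := fun i hi =>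
      eq_sub_of_add_eq (Finset.sum_erase_add s lam hi)
    rw [Finset.sum_congr rfl herase, Finset.sum_sub_distrib, Finset.sum_const, hs]
    simp
    ring
  have hpos : 0 < ∑ i ∈ s, ∑ j ∈ s.erase i, lam j :=
    Finset.sum_pos (fun i hi => h _ (by rw [Finset.card_erase_of_mem hi, hs]; rfl))
      (Finset.card_pos.1 (by omega))
  rw [hmean] at hpos
  exact pos_of_mul_pos_right hpos p.cast_nonneg

lemma gammaHat_pred_subset (n p : ℕ) : GammaHat n (p - 1) ⊆ GammaHat n p := by
  cases p with
  | zero => exact subset_rfl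
  | succ p => exact gammaHat_subset_succ n p

lemma lt_sum_of_mem_gammaHat_pred (h : lam ∈ GammaHat n (p - 1)) {s : Finset (Fin n)}
    (hs : s ∈ pSubsets n p) {i : Fin n} (hi : i ∈ s) : lam i < ∑ j ∈ s, lam j := by
  rw [← Finset.add_sum_erase s lam hi, lt_add_iff_pos_right]
  exact h _ (by rw [Finset.card_erase_of_mem hi, mem_pSubsets.1 hs])

lemma comp_perm_mem_gammaHat (h : lam ∈ GammaHat n p) (σ : Equiv.Perm (Fin n)) :
    lam ∘ σ ∈ GammaHat n p := fun s hs => by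
  simpa using h (s.map σ.toEmbedding) (by simpa using hs)

lemma pMA_comp_perm (lam : Fin n → ℝ) (σ : Equiv.Perm (Fin n)) :
    pMA n p (lam ∘ σ) = pMA n p lam :=
  Finset.prod_equiv σ.finsetCongr (map_mem_pSubsets σ) (by simp)

/-- The partial derivative `∂ log M_p / ∂λᵢ = ∑_{s ∋ i} (∑_{j ∈ s} λⱼ)⁻¹`, a coefficient of the
linearised `p`-Monge–Ampère operator. -/
def pMACoeff {n : ℕ} (p : ℕ) (lam : Fin n → ℝ) (i : Fin n) : ℝ :=
  ∑ s ∈ pSubsets n p, if i ∈ s then (∑ j ∈ s, lam j)⁻¹ else 0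

lemma pMACoeff_comp_perm (lam : Fin n → ℝ) (σ : Equiv.Perm (Fin n)) (i : Fin n) :
    pMACoeff p (lam ∘ σ) i = pMACoeff p lam (σ i) :=
  Finset.sum_equiv σ.finsetCongr (map_mem_pSubsets σ) (by simp)

lemma sum_pMACoeff_mul (lam d : Fin n → ℝ) : ∑ i, pMACoeff p lam i * d i =
    ∑ s ∈ pSubsets n p, (∑ j ∈ s, lam j)⁻¹ * ∑ i ∈ s, d i := by
  simp only [pMACoeff, Finset.sum_mul, ite_mul, zero_mul]
  rw [Finset.sum_comm]
  simp [Finset.mul_sum]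

lemma inv_sum_nonneg (h : lam ∈ GammaHat n p) {s : Finset (Fin n)} (hs : s ∈ pSubsets n p) :
    0 ≤ (∑ j ∈ s, lam j)⁻¹ :=
  inv_nonneg.2 (h s (mem_pSubsets.1 hs)).le

lemma pMACoeff_nonneg (h : lam ∈ GammaHat n p) (i : Fin n) : 0 ≤ pMACoeff p lam i :=
  Finset.sum_nonneg fun _ hs => ite_nonneg (inv_sum_nonneg h hs) le_rfl

lemma inv_sum_le_pMACoeff (h : lam ∈ GammaHat n p) {s : Finset (Fin n)} (hs : s ∈ pSubsets n p)
    {i : Fin n} (hi : i ∈ s) : (∑ j ∈ s, lam j)⁻¹ ≤ pMACoeff p lam i := by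
  simpa [hi, pMACoeff] using Finset.single_le_sum
    (f := fun s : Finset (Fin n) => if i ∈ s then (∑ j ∈ s, lam j)⁻¹ else 0)
    (fun t ht => ite_nonneg (inv_sum_nonneg h ht) le_rfl) hs

lemma inv_sum_le_sum_pMACoeff (h : lam ∈ GammaHat n p) {s : Finset (Fin n)}
    (hs : s ∈ pSubsets n p) : (∑ j ∈ s, lam j)⁻¹ ≤ ∑ i, pMACoeff p lam i := by
  obtain ⟨i, hi⟩ : s.Nonempty :=
    Finset.card_ne_zero.1 (mem_pSubsets.1 hs ▸ ne_zero_of_mem_gammaHat h)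
  exact (inv_sum_le_pMACoeff h hs hi).trans
    (Finset.single_le_sum (fun j _ => pMACoeff_nonneg h j) (Finset.mem_univ i))

lemma sum_pMACoeff_mul_self (h : lam ∈ GammaHat n p) :
    ∑ i, pMACoeff p lam i * lam i = n.choose p := by
  rw [sum_pMACoeff_mul, Finset.sum_congr rfl fun s hs =>
    inv_mul_cancel₀ (h s (mem_pSubsets.1 hs)).ne']
  simp

/- Concavity of `log M_p`, through `log x ≤ x - 1` for the ratios of corresponding factors. -/
lemma sum_pMACoeff_mul_self_le (h : lam ∈ GammaHat n p) (h' : mu ∈ GammaHat n p)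
    (hle : pMA n p lam ≤ pMA n p mu) :
    ∑ i, pMACoeff p lam i * lam i ≤ ∑ i, pMACoeff p lam i * mu i := by
  have hlam {s} (hs : s ∈ pSubsets n p) : 0 < ∑ j ∈ s, lam j := h s (mem_pSubsets.1 hs)
  have hratio {s} (hs : s ∈ pSubsets n p) : 0 < (∑ j ∈ s, lam j)⁻¹ * ∑ i ∈ s, mu i :=
    mul_pos (inv_pos.2 (hlam hs)) (h' s (mem_pSubsets.1 hs))
  have hlog : 0 ≤ ∑ s ∈ pSubsets n p, Real.log ((∑ j ∈ s, lam j)⁻¹ * ∑ i ∈ s, mu i) := by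
    rw [← Real.log_prod fun s hs => (hratio hs).ne', Finset.prod_mul_distrib,
      Finset.prod_inv_distrib]
    exact Real.log_nonneg ((one_le_inv_mul₀ (Finset.prod_pos fun s => hlam)).2 hle)
  rw [sum_pMACoeff_mul_self h, sum_pMACoeff_mul]
  have htangent := hlog.trans
    (Finset.sum_le_sum fun s hs => Real.log_le_sub_one_of_pos (hratio hs))
  simpa [Finset.sum_sub_distrib] using htangent

/- The tangent inequality at all permutations of `mu` extends to all rotated diagonals, since the
latter are averages of the former. -/
lemma sum_pMACoeff_mul_self_le_of_isEigenframe {E : Type*} [NormedAddCommGroup E]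
    [InnerProductSpace ℝ E] {B : E →L[ℝ] E →L[ℝ] ℝ} {b : OrthonormalBasis (Fin n) ℝ E}
    (hB : IsEigenframe B b mu) (h : lam ∈ GammaHat n p) (h' : mu ∈ GammaHat n p)
    (hle : pMA n p lam ≤ pMA n p mu) (c : OrthonormalBasis (Fin n) ℝ E) :
    ∑ i, pMACoeff p lam i * lam i ≤ ∑ i, pMACoeff p lam i * B (c i) (c i) := by
  obtain ⟨w, hw0, hw1, hdiag⟩ := hB.exists_apply_basis_eq_sum_perm c
  calc ∑ i, pMACoeff p lam i * lam i = ∑ σ, w σ * ∑ i, pMACoeff p lam i * lam i := by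
        rw [← Finset.sum_mul, hw1, one_mul]
    _ ≤ ∑ σ, w σ * ∑ i, pMACoeff p lam i * mu (σ i) :=
        Finset.sum_le_sum fun σ _ => mul_le_mul_of_nonneg_left
          (sum_pMACoeff_mul_self_le h (comp_perm_mem_gammaHat h' σ)
            (hle.trans_eq (pMA_comp_perm mu σ).symm)) (hw0 σ)
    _ = ∑ i, pMACoeff p lam i * B (c i) (c i) := by
        simp only [hdiag, Finset.mul_sum]
        rw [Finset.sum_comm]
        exact Finset.sum_congr rfl fun i _ => Finset.sum_congr rfl fun σ _ => by ring

lemma sum_eq_prod_inv_sum (hM : pMA n p lam = 1) {s : Finset (Fin n)} (hs : s ∈ pSubsets n p) :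
    ∑ j ∈ s, lam j = ∏ t ∈ (pSubsets n p).erase s, (∑ j ∈ t, lam j)⁻¹ := by
  rw [Finset.prod_inv_distrib]
  exact eq_inv_of_mul_eq_one_left
    ((Finset.mul_prod_erase _ (fun t => ∑ j ∈ t, lam j) hs).trans hM)

lemma card_erase_pSubsets {s : Finset (Fin n)} (hs : s ∈ pSubsets n p) :
    ((pSubsets n p).erase s).card = n.choose p - 1 := by
  simp [Finset.card_erase_of_mem hs]

lemma le_sum_pMACoeff_pow (hpn : p ≤ n) (h : lam ∈ GammaHat n (p - 1)) (hM : pMA n p lam = 1)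
    (i : Fin n) : lam i ≤ (∑ j, pMACoeff p lam j) ^ (n.choose p - 1) := by
  have h' := gammaHat_pred_subset n p h
  obtain ⟨s, hs, hi⟩ := exists_mem_pSubsets (ne_zero_of_mem_gammaHat h') hpn i
  calc lam i ≤ ∑ j ∈ s, lam j := (lt_sum_of_mem_gammaHat_pred h hs hi).le
    _ = ∏ t ∈ (pSubsets n p).erase s, (∑ j ∈ t, lam j)⁻¹ := sum_eq_prod_inv_sum hM hs
    _ ≤ ∏ t ∈ (pSubsets n p).erase s, ∑ j, pMACoeff p lam j :=
        Finset.prod_le_prod (fun t ht => inv_sum_nonneg h' (Finset.mem_of_mem_erase ht))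
          fun t ht => inv_sum_le_sum_pMACoeff h' (Finset.mem_of_mem_erase ht)
    _ = (∑ j, pMACoeff p lam j) ^ (n.choose p - 1) := by
        rw [Finset.prod_const, card_erase_pSubsets hs]

lemma sum_le_mul_of_forall_le {C : ℝ} (hC : ∀ i, lam i ≤ C) {s : Finset (Fin n)}
    (hs : s ∈ pSubsets n p) : ∑ j ∈ s, lam j ≤ p * C := by
  simpa [mem_pSubsets.1 hs] using Finset.sum_le_card_nsmul s lam C fun i _ => hC i

lemma inv_le_pMACoeff (hpn : p ≤ n) (h : lam ∈ GammaHat n p) {C : ℝ} (hC : ∀ i, lam i ≤ C)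
    (i : Fin n) : (p * C)⁻¹ ≤ pMACoeff p lam i := by
  obtain ⟨s, hs, hi⟩ := exists_mem_pSubsets (ne_zero_of_mem_gammaHat h) hpn i
  exact (inv_anti₀ (h s (mem_pSubsets.1 hs)) (sum_le_mul_of_forall_le hC hs)).trans
    (inv_sum_le_pMACoeff h hs hi)

lemma pMACoeff_le (h : lam ∈ GammaHat n p) (hM : pMA n p lam = 1) {C : ℝ} (hC : ∀ i, lam i ≤ C)
    (i : Fin n) : pMACoeff p lam i ≤ n.choose p * (p * C) ^ (n.choose p - 1) := by
  have hinv {s} (hs : s ∈ pSubsets n p) : (∑ j ∈ s, lam j)⁻¹ ≤ (p * C) ^ (n.choose p - 1) :=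
    calc (∑ j ∈ s, lam j)⁻¹ = ∏ t ∈ (pSubsets n p).erase s, ∑ j ∈ t, lam j := by
          rw [sum_eq_prod_inv_sum hM hs, Finset.prod_inv_distrib, inv_inv]
      _ ≤ ∏ _t ∈ (pSubsets n p).erase s, (p * C) :=
          Finset.prod_le_prod
            (fun t ht => (h t (mem_pSubsets.1 (Finset.mem_of_mem_erase ht))).le)
            fun t ht => sum_le_mul_of_forall_le hC (Finset.mem_of_mem_erase ht)
      _ = (p * C) ^ (n.choose p - 1) := by rw [Finset.prod_const, card_erase_pSubsets hs]
  calc pMACoeff p lam i ≤ ∑ _s ∈ pSubsets n p, (p * C) ^ (n.choose p - 1) :=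
        Finset.sum_le_sum fun s hs => by
          split_ifs
          exacts [hinv hs, (inv_sum_nonneg h hs).trans (hinv hs)]
    _ = n.choose p * (p * C) ^ (n.choose p - 1) := by simp

/- If the other summands of `s` add up to more than `μ / 2`, one of them is at least `μ / (2 p)`,
and the whole sum is larger still. -/
lemma div_le_sum_or_sum_erase_le (h : lam ∈ GammaHat n (p - 1)) {s : Finset (Fin n)}
    (hs : s ∈ pSubsets n p) {i : Fin n} (hi : i ∈ s) {μ : ℝ} (hμ : 0 < μ) :
    μ / (2 * p) ≤ ∑ j ∈ s, lam j ∨ ∑ j ∈ s.erase i, lam j ≤ μ / 2 := by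
  refine or_iff_not_imp_right.2 fun hlarge => ?_
  rw [not_le] at hlarge
  have hcard : (s.erase i).card ≤ p := (Finset.card_erase_le).trans (mem_pSubsets.1 hs).le
  have hp : (0 : ℝ) < p := Nat.cast_pos.2 (mem_pSubsets.1 hs ▸ Finset.card_pos.2 ⟨i, hi⟩)
  have hne : (s.erase i).Nonempty :=
    Finset.nonempty_of_sum_ne_zero (((half_pos hμ).trans hlarge).ne')
  obtain ⟨j, hj, hlam⟩ : ∃ j ∈ s.erase i, μ / (2 * p) ≤ lam j := by
    refine Finset.exists_le_of_sum_le hne ?_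
    calc ∑ _j ∈ s.erase i, μ / (2 * p) = (s.erase i).card * (μ / (2 * p)) := by simp
      _ ≤ p * (μ / (2 * p)) := by gcongr
      _ = μ / 2 := by field_simp
      _ ≤ ∑ j ∈ s.erase i, lam j := hlarge.le
  exact hlam.trans (lt_sum_of_mem_gammaHat_pred h hs (Finset.mem_of_mem_erase hj)).le

lemma sum_swap_eq_of_mem {s : Finset (Fin n)} {i m : Fin n} (hi : i ∈ s) (hm : m ∈ s) :
    ∑ j ∈ s, lam (Equiv.swap m i j) = ∑ j ∈ s, lam j :=
  Finset.sum_equiv (Equiv.swap m i)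
    (fun j => by rw [Equiv.swap_apply_def]; split_ifs <;> simp_all) fun _ _ => rfl

lemma sum_swap_eq_of_notMem {s : Finset (Fin n)} {i m : Fin n} (hi : i ∈ s) (hm : m ∉ s) :
    ∑ j ∈ s, lam (Equiv.swap m i j) = ∑ j ∈ s, lam j + (lam m - lam i) := by
  have hrest : ∑ j ∈ s.erase i, lam (Equiv.swap m i j) = ∑ j ∈ s.erase i, lam j :=
    Finset.sum_congr rfl fun j hj => by
      rw [Equiv.swap_apply_of_ne_of_ne (ne_of_mem_of_not_mem (Finset.mem_of_mem_erase hj) hm)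
        (Finset.ne_of_mem_erase hj)]
  rw [← Finset.add_sum_erase s _ hi, ← Finset.add_sum_erase s lam hi, Equiv.swap_apply_right, hrest]
  ring

lemma inv_sum_swap_le (h : lam ∈ GammaHat n p) {m : Fin n} (hm : ∀ i, lam i ≤ lam m)
    {s : Finset (Fin n)} (hs : s ∈ pSubsets n p) {i : Fin n} (hi : i ∈ s) :
    (∑ j ∈ s, lam (Equiv.swap m i j))⁻¹ ≤ (∑ j ∈ s, lam j)⁻¹ := by
  by_cases hms : m ∈ s
  · rw [sum_swap_eq_of_mem hi hms]
  · rw [sum_swap_eq_of_notMem hi hms]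
    exact inv_anti₀ (h s (mem_pSubsets.1 hs)) (le_add_of_nonneg_right (sub_nonneg.2 (hm i)))

lemma inv_sum_sub_le_swap (h : lam ∈ GammaHat n (p - 1)) {m : Fin n} (hm : ∀ i, lam i ≤ lam m)
    (hm0 : 0 < lam m) {s : Finset (Fin n)} (hs : s ∈ pSubsets n p) {i : Fin n} (hi : i ∈ s) :
    4 / 3 * ((∑ j ∈ s, lam j)⁻¹ - 2 * p / lam m) ≤ 2 * lam m *
      (((∑ j ∈ s, lam j)⁻¹ - (∑ j ∈ s, lam (Equiv.swap m i j))⁻¹) / (lam m - lam i)) := by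
  have h' := gammaHat_pred_subset n p h
  have hp : (1 : ℝ) ≤ p := Nat.one_le_cast.2 (mem_pSubsets.1 hs ▸ Finset.card_pos.2 ⟨i, hi⟩)
  have hS : 0 < ∑ j ∈ s, lam j := h' s (mem_pSubsets.1 hs)
  obtain hlarge | hsmall := le_or_gt (lam m / (2 * p)) (∑ j ∈ s, lam j)
  · have hlhs : (∑ j ∈ s, lam j)⁻¹ ≤ 2 * p / lam m := by
      simpa only [inv_div] using inv_anti₀ (by positivity) hlarge
    have hrhs := mul_nonneg (mul_nonneg zero_le_two hm0.le)
      (div_nonneg (sub_nonneg.2 (inv_sum_swap_le h' hm hs hi)) (sub_nonneg.2 (hm i)))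
    linarith
  have hSm : ∑ j ∈ s, lam j < lam m := hsmall.trans_le (div_le_self hm0.le (by linarith))
  have hms : m ∉ s := fun hms => hSm.not_ge (lt_sum_of_mem_gammaHat_pred h hs hms).le
  have hd : 0 < lam m - lam i := sub_pos.2 ((lt_sum_of_mem_gammaHat_pred h hs hi).trans hSm)
  have hrest : ∑ j ∈ s, lam j - lam i ≤ lam m / 2 :=
    (eq_sub_of_add_eq (Finset.sum_erase_add s lam hi)).symm.trans_le
      ((div_le_sum_or_sum_erase_le h hs hi hm0).resolve_left hsmall.not_ge)
  rw [sum_swap_eq_of_notMem hi hms]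
  set S := ∑ j ∈ s, lam j
  have hW : 0 < S + (lam m - lam i) := add_pos hS hd
  calc 4 / 3 * (S⁻¹ - 2 * p / lam m) ≤ 4 / 3 * S⁻¹ := by
        gcongr
        exact sub_le_self _ (by positivity)
    _ ≤ 2 * (lam m / (S + (lam m - lam i))) * S⁻¹ := by
        gcongr
        rw [mul_div_assoc', div_le_div_iff₀ (by norm_num) hW]
        linarith
    _ = 2 * lam m * ((S⁻¹ - (S + (lam m - lam i))⁻¹) / (lam m - lam i)) := by
        field_simp
        ring

/- The divided differences of the coefficients, which the rotation argument produces, control the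
coefficients themselves up to an error of size `1 / λ_max`. -/
lemma pMACoeff_sub_le (h : lam ∈ GammaHat n (p - 1)) {m : Fin n} (hm : ∀ i, lam i ≤ lam m)
    (hm0 : 0 < lam m) (i : Fin n) :
    4 / 3 * (pMACoeff p lam i - 2 * p * n.choose p / lam m) ≤
      2 * lam m * ((pMACoeff p lam i - pMACoeff p lam m) / (lam m - lam i)) := by
  have hswap : pMACoeff p lam m = pMACoeff p (lam ∘ Equiv.swap m i) i := by
    rw [pMACoeff_comp_perm, Equiv.swap_apply_right]
  have herror : (2 * p * n.choose p / lam m : ℝ) = ∑ _s ∈ pSubsets n p, 2 * p / lam m := by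
    simp
    ring
  rw [hswap, herror, pMACoeff, pMACoeff, ← Finset.sum_sub_distrib, ← Finset.sum_sub_distrib,
    Finset.sum_div, Finset.mul_sum, Finset.mul_sum]
  refine Finset.sum_le_sum fun s hs => ?_
  by_cases hi : i ∈ s
  · simpa only [hi, if_true, Function.comp_apply] using inv_sum_sub_le_swap h hm hm0 hs hi
  · simp only [hi, if_false, sub_self, zero_div, mul_zero, zero_sub, mul_neg, neg_nonpos]
    positivity

end PMongeAmpere

section Rotation

open scoped RealInnerProductSpace

variable {ι : Type*} [Fintype ι] {E : Type*} [NormedAddCommGroup E] [InnerProductSpace ℝ E]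

lemma exists_linearIsometryEquiv_hasDerivAt [CompleteSpace E] {T : E →L[ℝ] E}
    (hT : T ∈ skewAdjoint (E →L[ℝ] E)) : ∃ U : ℝ → E ≃ₗᵢ[ℝ] E,
      (∀ v, U 0 v = v) ∧ ∀ v t, HasDerivAt (fun t => U t v) (U t (T v)) t := by
  let +nondep : NormedAlgebra ℚ (E →L[ℝ] E) := .restrictScalars ℚ ℝ _
  have hskew (t : ℝ) : t • T ∈ skewAdjoint (E →L[ℝ] E) := skewAdjoint.smul_mem t hT
  refine ⟨fun t => Unitary.linearIsometryEquiv
    ⟨NormedSpace.exp (t • T), NormedSpace.exp_mem_unitary_of_mem_skewAdjoint (hskew t)⟩,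
    fun v => ?_, fun v t => ?_⟩
  · change NormedSpace.exp ((0 : ℝ) • T) v = v
    rw [zero_smul, NormedSpace.exp_zero]
    rfl
  · change HasDerivAt (fun t : ℝ => NormedSpace.exp (t • T) v) (NormedSpace.exp (t • T) (T v)) t
    simpa using (hasDerivAt_exp_smul_const (𝕂 := ℝ) T t).clm_apply (hasDerivAt_const t v)

lemma exists_mem_skewAdjoint_apply_basis [CompleteSpace E] (b : OrthonormalBasis ι ℝ E)
    {W : ι → ι → ℝ} (hW : ∀ i j, W j i = -W i j) :
    ∃ T ∈ skewAdjoint (E →L[ℝ] E), ∀ i, T (b i) = ∑ j, W i j • b j := by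
  classical
  set T : E →L[ℝ] E := ∑ i, (innerSL ℝ (b i)).smulRight (∑ j, W i j • b j)
  have hT (v : E) : T v = ∑ i, ⟪b i, v⟫ • ∑ j, W i j • b j := by
    simp [T, _root_.sum_apply]
  refine ⟨T, ?_, fun i => by simp [hT, b.inner_eq_ite]⟩
  rw [skewAdjoint.mem_iff, ContinuousLinearMap.star_eq_adjoint, eq_comm,
    ContinuousLinearMap.eq_adjoint_iff]
  intro v w
  simp only [_root_.neg_apply, hT, inner_neg_left, sum_inner, inner_sum, inner_smul_left,
    inner_smul_right, conj_trivial, Finset.mul_sum]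
  rw [Finset.sum_comm, ← Finset.sum_neg_distrib]
  refine Finset.sum_congr rfl fun i _ => ?_
  rw [← Finset.sum_neg_distrib]
  refine Finset.sum_congr rfl fun j _ => ?_
  rw [hW, real_inner_comm v (b j)]
  ring

lemma hasDerivAt_comp_add_smul_rotate {G : E → E →L[ℝ] E →L[ℝ] ℝ} (hG : Differentiable ℝ G)
    {T : E →L[ℝ] E} {U : ℝ → E ≃ₗᵢ[ℝ] E}
    (hU : ∀ v t, HasDerivAt (fun t => U t v) (U t (T v)) t) (x e v w : E) (t : ℝ) :
    HasDerivAt (fun t : ℝ => G (x + t • e) (U t v) (U t w))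
      (dirDeriv e G (x + t • e) (U t v) (U t w) + G (x + t • e) (U t (T v)) (U t w) +
        G (x + t • e) (U t v) (U t (T w))) t :=
  hasDerivAt_apply_apply (hasDerivAt_comp_add_smul hG x e t) (hU v t) (hU w t)

lemma dirDeriv_dirDeriv_hessian_apply {u : E → ℝ} (hu : ContDiff ℝ 4 u) (x e v : E) :
    dirDeriv e (dirDeriv e (hessian u)) x v v = hessian (fun y => hessian u y v v) x e e := by
  have hhess : ContDiff ℝ 2 (hessian u) := contDiff_hessian hu (by norm_num)
  rw [hessian_apply (contDiff_hessian_apply hu (by norm_num) v v), dirDeriv_apply_apply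
    ((contDiff_dirDeriv (k := 1) hhess (by norm_num) e).differentiable (by norm_num))]
  congr 1
  exact funext fun y => dirDeriv_apply_apply (hhess.differentiable (by norm_num)) e v v y

/-- The orthonormal basis `b` diagonalises the Hessian of `u` at `x`, and the weights `a` support
the Hessian of `u` from below at `x`: the diagonal entries, weighted by `a`, are at every point and
in every orthonormal basis at least what they are at `x` in the basis `b`. -/
structure IsSupportingFrame (u : E → ℝ) (x : E) (b : OrthonormalBasis ι ℝ E) (lam a : ι → ℝ) :
    Prop where
  isEigenframe : IsEigenframe (hessian u x) b lam
  nonneg : ∀ i, 0 ≤ a i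
  sum_le : ∀ y (c : OrthonormalBasis ι ℝ E),
    ∑ i, a i * lam i ≤ ∑ i, a i * hessian u y (c i) (c i)

namespace IsSupportingFrame

variable {u : E → ℝ} {x : E} {b : OrthonormalBasis ι ℝ E} {lam a : ι → ℝ}

/- The weighted diagonal of the Hessian, rotated along the flow of `T` while moving along the line
through `x` in direction `e`, is minimal at time zero. -/
lemma second_variation_nonneg [CompleteSpace E] (h : IsSupportingFrame u x b lam a)
    (hu : ContDiff ℝ 4 u) {T : E →L[ℝ] E} (hT : T ∈ skewAdjoint (E →L[ℝ] E)) (e : E) :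
    0 ≤ ∑ i, a i * (hessian (fun y => hessian u y (b i) (b i)) x e e +
      4 * dirDeriv e (hessian u) x (T (b i)) (b i) +
      2 * (hessian u x (T (T (b i))) (b i) + hessian u x (T (b i)) (T (b i)))) := by
  obtain ⟨U, hU₀, hU⟩ := exists_linearIsometryEquiv_hasDerivAt hT
  have hhess : ContDiff ℝ 2 (hessian u) := contDiff_hessian hu (by norm_num)
  have hdiff : Differentiable ℝ (hessian u) := hhess.differentiable (by norm_num)
  have hdiff' : Differentiable ℝ (dirDeriv e (hessian u)) :=
    (contDiff_dirDeriv (k := 1) hhess (by norm_num) e).differentiable (by norm_num)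
  have hsymm (v w : E) : hessian u x v w = hessian u x w v :=
    hessian_comm (hu.of_le (by norm_num)) x v w
  have hsymm' (v w : E) : dirDeriv e (hessian u) x v w = dirDeriv e (hessian u) x w v := by
    simp only [dirDeriv_apply_apply hdiff, hessian_comm (hu.of_le (by norm_num)) _ v w]
  have hmin : IsLocalMin
      (fun t : ℝ => ∑ i, a i * hessian u (x + t • e) (U t (b i)) (U t (b i))) 0 :=
    .of_forall fun t => by
      simpa [hU₀, h.isEigenframe.apply_basis_self] using h.sum_le (x + t • e) (b.map (U t))
  refine (second_deriv_nonneg_of_isLocalMin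
    (.of_forall fun t => HasDerivAt.fun_sum fun i _ =>
      (hasDerivAt_comp_add_smul_rotate hdiff hU x e (b i) (b i) t).const_mul (a i))
    (HasDerivAt.fun_sum fun i _ =>
      (((hasDerivAt_comp_add_smul_rotate hdiff' hU x e (b i) (b i) 0).add
        (hasDerivAt_comp_add_smul_rotate hdiff hU x e (T (b i)) (b i) 0)).add
        (hasDerivAt_comp_add_smul_rotate hdiff hU x e (b i) (T (b i)) 0)).const_mul (a i))
    hmin).trans_eq (Finset.sum_congr rfl fun i _ => ?_)
  simp only [hU₀, zero_smul, add_zero, dirDeriv_dirDeriv_hessian_apply hu,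
    hsymm' (b i) (T (b i)), hsymm (b i) (T (T (b i)))]
  ring

lemma second_variation_matrix_nonneg (h : IsSupportingFrame u x b lam a) (hu : ContDiff ℝ 4 u)
    {W : ι → ι → ℝ} (hW : ∀ i j, W j i = -W i j) (e : E) :
    0 ≤ ∑ i, a i * hessian (fun y => hessian u y (b i) (b i)) x e e +
      ∑ i, ∑ j, a i * (4 * W i j * dirDeriv e (hessian u) x (b j) (b i) +
        2 * W i j ^ 2 * (lam j - lam i)) := by
  classical
  have := b.toBasis.finiteDimensional_of_finite
  have := FiniteDimensional.complete ℝ E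
  obtain ⟨T, hT, hTb⟩ := exists_mem_skewAdjoint_apply_basis b hW
  have hinner (i j : ι) : ⟪b j, T (b i)⟫ = W i j := by simp [hTb, inner_sum, inner_smul_right,
    b.inner_eq_ite]
  have hTT (i : ι) : ⟪b i, T (T (b i))⟫ = -∑ j, W i j ^ 2 := by
    rw [hTb i, map_sum, inner_sum, ← Finset.sum_neg_distrib]
    refine Finset.sum_congr rfl fun j _ => ?_
    rw [map_smul, inner_smul_right, hinner, hW]
    ring
  refine (h.second_variation_nonneg hu hT e).trans_eq ?_
  rw [← Finset.sum_add_distrib]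
  refine Finset.sum_congr rfl fun i _ => ?_
  have hfirst : dirDeriv e (hessian u) x (T (b i)) (b i) =
      ∑ j, W i j * dirDeriv e (hessian u) x (b j) (b i) := by
    simp only [hTb i, map_sum, map_smul, _root_.sum_apply, _root_.smul_apply, smul_eq_mul]
  rw [hessian_comm (hu.of_le (by norm_num)) x (T (T (b i))), h.isEigenframe i, hTT,
    h.isEigenframe.apply_self_eq_sum, hfirst, ← Finset.mul_sum, Finset.sum_add_distrib]
  simp only [hinner, mul_assoc, mul_sub, ← Finset.mul_sum, Finset.sum_sub_distrib, ← Finset.sum_mul]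
  ring

/- The optimal infinitesimal rotation: each entry of `W` minimises its own quadratic. -/
lemma sum_div_mul_sq_le (h : IsSupportingFrame u x b lam a) (hu : ContDiff ℝ 4 u) (e : E) :
    ∑ i, ∑ j, (a i - a j) / (lam j - lam i) * dirDeriv e (hessian u) x (b i) (b j) ^ 2 ≤
      ∑ i, a i * hessian (fun y => hessian u y e e) x (b i) (b i) := by
  set D : ι → ι → ℝ := fun i j => dirDeriv e (hessian u) x (b i) (b j) with hD
  have hdiff : Differentiable ℝ (hessian u) :=
    (contDiff_hessian (k := 2) hu (by norm_num)).differentiable (by norm_num)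
  have hDsymm (i j : ι) : D j i = D i j := by
    simp only [hD, dirDeriv_apply_apply hdiff, hessian_comm (hu.of_le (by norm_num)) _ (b j)]
  have hvar : 0 ≤ ∑ i, a i * hessian (fun y => hessian u y (b i) (b i)) x e e +
      ∑ i, ∑ j, a i * (4 * -(D i j / (lam j - lam i)) * D j i +
        2 * (-(D i j / (lam j - lam i))) ^ 2 * (lam j - lam i)) :=
    h.second_variation_matrix_nonneg hu (fun i j => by
      rw [hDsymm, ← neg_sub (lam j), div_neg]) e
  have hterm (i j : ι) : a i * (4 * -(D i j / (lam j - lam i)) * D j i +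
      2 * (-(D i j / (lam j - lam i))) ^ 2 * (lam j - lam i)) =
      -(2 * (a i / (lam j - lam i) * D i j ^ 2)) := by
    obtain hzero | hne := eq_or_ne (lam j - lam i) 0
    · simp [hzero]
    · rw [hDsymm]
      field_simp
      ring
  have hswap : ∑ i, ∑ j, a j / (lam j - lam i) * D i j ^ 2 =
      -∑ i, ∑ j, a i / (lam j - lam i) * D i j ^ 2 := by
    rw [Finset.sum_comm]
    simp only [← Finset.sum_neg_distrib]
    refine Finset.sum_congr rfl fun i _ => Finset.sum_congr rfl fun j _ => ?_
    rw [hDsymm, ← neg_sub (lam j), div_neg, neg_mul]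
  simp only [hterm, Finset.sum_neg_distrib, hessian_hessian_comm hu x e] at hvar
  simp only [← Finset.mul_sum] at hvar
  simp only [sub_div, sub_mul, Finset.sum_sub_distrib]
  change ∑ i, ∑ j, a i / (lam j - lam i) * D i j ^ 2 -
    ∑ i, ∑ j, a j / (lam j - lam i) * D i j ^ 2 ≤ _
  linarith

lemma sub_div_sub_nonneg (h : IsSupportingFrame u x b lam a) (i j : ι) :
    0 ≤ (a i - a j) / (lam j - lam i) := by
  classical
  have hsupp := h.sum_le x (b.reindex (Equiv.swap i j))
  simp only [OrthonormalBasis.reindex_apply, Equiv.symm_swap,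
    h.isEigenframe.apply_basis_self] at hsupp
  obtain rfl | hij := eq_or_ne i j
  · simp
  have hprod : 0 ≤ (a i - a j) * (lam j - lam i) :=
    calc 0 ≤ ∑ k, a k * (lam (Equiv.swap i j k) - lam k) := by
          simpa only [mul_sub, Finset.sum_sub_distrib, sub_nonneg] using hsupp
      _ = a i * (lam j - lam i) + a j * (lam i - lam j) := by
          rw [Fintype.sum_eq_add i j hij fun k hk => by
            rw [Equiv.swap_apply_of_ne_of_ne hk.1 hk.2, sub_self, mul_zero],
            Equiv.swap_apply_left, Equiv.swap_apply_right]
      _ = (a i - a j) * (lam j - lam i) := by ring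
  exact div_nonneg_iff.2 (mul_nonneg_iff.1 hprod)

end IsSupportingFrame

lemma two_mul_sum_le_sum_sum {f : ι → ι → ℝ} (hf : ∀ i j, 0 ≤ f i j)
    (hsymm : ∀ i j, f i j = f j i) {m : ι} (hm : f m m = 0) :
    2 * ∑ i, f i m ≤ ∑ i, ∑ j, f i j := by
  classical
  rw [← Finset.add_sum_erase _ (fun i => ∑ j, f i j) (Finset.mem_univ m), two_mul]
  refine add_le_add (Finset.sum_congr rfl fun i _ => hsymm i m).le ?_
  rw [← Finset.add_sum_erase _ (fun i => f i m) (Finset.mem_univ m), hm, zero_add]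
  exact Finset.sum_le_sum fun i _ =>
    Finset.single_le_sum (f := f i) (fun j _ => hf i j) (Finset.mem_univ m)

/- Of the pairs of eigendirections only those containing `b m` are kept. -/
lemma IsSupportingFrame.sum_div_mul_dirDeriv_sq_le {u : E → ℝ} {x : E}
    {b : OrthonormalBasis ι ℝ E} {lam a : ι → ℝ} (h : IsSupportingFrame u x b lam a)
    (hu : ContDiff ℝ 4 u) (m : ι) :
    ∑ i, 2 * ((a i - a m) / (lam m - lam i)) *
        dirDeriv (b i) (fun y => hessian u y (b m) (b m)) x ^ 2 ≤
      ∑ i, a i * hessian (fun y => hessian u y (b m) (b m)) x (b i) (b i) := by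
  classical
  have hdiff : Differentiable ℝ (hessian u) :=
    (contDiff_hessian (k := 2) hu (by norm_num)).differentiable (by norm_num)
  have hD (i : ι) : dirDeriv (b i) (fun y => hessian u y (b m) (b m)) x =
      dirDeriv (b m) (hessian u) x (b i) (b m) := by
    rw [dirDeriv_apply_apply hdiff, dirDeriv_hessian_comm (hu.of_le (by norm_num))]
  refine le_trans ?_ (h.sum_div_mul_sq_le hu (b m))
  simp only [mul_assoc, ← Finset.mul_sum, hD]
  refine two_mul_sum_le_sum_sum
    (f := fun i j => (a i - a j) / (lam j - lam i) * dirDeriv (b m) (hessian u) x (b i) (b j) ^ 2)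
    (fun i j => mul_nonneg (h.sub_div_sub_nonneg i j) (sq_nonneg _)) (fun i j => ?_) (by simp)
  rw [← neg_sub (a j), ← neg_sub (lam i), neg_div_neg_eq, dirDeriv_apply_apply hdiff,
    dirDeriv_apply_apply hdiff]
  simp only [hessian_comm (hu.of_le (by norm_num)) _ (b i)]

end Rotation

section OneVariable

lemma exists_deriv_eq_zero_of_le {q q' : ℝ → ℝ} (hq : ∀ t, HasDerivAt q (q' t) t)
    (hcont' : Continuous q') (h₀ : q' 0 ≤ 0) {T : ℝ} (hT : 0 < T) (hqT : q 0 ≤ q T) :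
    ∃ τ, 0 ≤ τ ∧ q' τ = 0 ∧ ∀ t ∈ Set.Ico 0 τ, q' t ≤ 0 := by
  have hcont : Continuous q := continuous_iff_continuousAt.2 fun t => (hq t).continuousAt
  obtain ⟨c, hc, hslope⟩ := exists_hasDerivAt_eq_slope q q' hT hcont.continuousOn fun t _ => hq t
  have hcrit : (Set.Ici 0 ∩ {t | 0 ≤ q' t}).Nonempty :=
    ⟨c, hc.1.le, (div_nonneg (sub_nonneg.2 hqT) (sub_nonneg.2 hT.le)).trans hslope.ge⟩
  obtain ⟨τ, ⟨hτ₀, hτ⟩, hτmin⟩ : ∃ τ, IsLeast (Set.Ici 0 ∩ {t | 0 ≤ q' t}) τ :=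
    ⟨_, (isClosed_Ici.inter (isClosed_le continuous_const hcont')).isLeast_csInf hcrit
      ⟨0, fun t ht => ht.1⟩⟩
  rw [Set.mem_Ici] at hτ₀
  have hneg {t : ℝ} (ht : t ∈ Set.Ico 0 τ) : q' t ≤ 0 := by
    by_contra! hpos
    exact ht.2.not_ge (hτmin ⟨ht.1, hpos.le⟩)
  refine ⟨τ, hτ₀, le_antisymm ?_ hτ, fun t => hneg⟩
  obtain h | h := hτ₀.eq_or_lt
  · rwa [← h]
  · exact le_of_tendsto (hcont'.tendsto τ |>.mono_left nhdsWithin_le_nhds)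
      (Filter.mem_of_superset (Ico_mem_nhdsLT h) fun t ht => hneg ht)

/- On the interval up to the first critical point, `q'² / 2 - M q` is nondecreasing. -/
lemma exists_sq_deriv_le {q q' q'' : ℝ → ℝ} {M : ℝ} (hq : ∀ t, HasDerivAt q (q' t) t)
    (hq' : ∀ t, HasDerivAt q' (q'' t) t) (h₀ : q' 0 ≤ 0) (hM : ∀ t, q t ≤ q 0 → q'' t ≤ M)
    {T : ℝ} (hT : 0 < T) (hqT : q 0 ≤ q T) : ∃ t, q' 0 ^ 2 ≤ 2 * M * (q 0 - q t) := by
  have hcont : Continuous q := continuous_iff_continuousAt.2 fun t => (hq t).continuousAt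
  have hcont' : Continuous q' := continuous_iff_continuousAt.2 fun t => (hq' t).continuousAt
  obtain ⟨τ, hτ₀, hτ, hneg⟩ := exists_deriv_eq_zero_of_le hq hcont' h₀ hT hqT
  have hanti : AntitoneOn q (Set.Icc 0 τ) :=
    antitoneOn_of_hasDerivWithinAt_nonpos (convex_Icc 0 τ) hcont.continuousOn
      (fun t _ => (hq t).hasDerivWithinAt) fun t ht => by
        rw [interior_Icc] at ht
        exact hneg t ⟨ht.1.le, ht.2⟩
  have henergy (t : ℝ) : HasDerivAt (fun t => q' t ^ 2 - 2 * M * q t)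
      (2 * (q' t * (q'' t - M))) t := by
    refine (((hq' t).pow 2).sub ((hq t).const_mul (2 * M))).congr_deriv ?_
    push_cast
    ring
  have hmono : MonotoneOn (fun t => q' t ^ 2 - 2 * M * q t) (Set.Icc 0 τ) :=
    monotoneOn_of_hasDerivWithinAt_nonneg (convex_Icc 0 τ)
      (fun t _ => (henergy t).continuousAt.continuousWithinAt)
      (fun t _ => (henergy t).hasDerivWithinAt) fun t ht => by
        rw [interior_Icc] at ht
        exact mul_nonneg zero_le_two (mul_nonneg_of_nonpos_of_nonpos (hneg t ⟨ht.1.le, ht.2⟩)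
          (sub_nonpos.2 (hM t (hanti (Set.left_mem_Icc.2 hτ₀) ⟨ht.1.le, ht.2.le⟩ ht.1.le))))
  have hfinal := hmono (Set.left_mem_Icc.2 hτ₀) (Set.right_mem_Icc.2 hτ₀) hτ₀
  simp only [hτ] at hfinal
  exact ⟨τ, by linarith⟩

lemma log_deriv_test_of_isLocalMax {v v' g g' ψ ψ' : ℝ → ℝ} {v₂ g₂ ψ₂ : ℝ} {β : ℕ}
    (hv : ∀ t, HasDerivAt v (v' t) t) (hv' : HasDerivAt v' v₂ 0)
    (hψ : ∀ t, HasDerivAt ψ (ψ' t) t) (hψ' : HasDerivAt ψ' ψ₂ 0)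
    (hg : ∀ t, HasDerivAt g (g' t) t) (hg' : HasDerivAt g' g₂ 0) (hv₀ : 0 < v 0) (hg₀ : 0 < g 0)
    (hmax : IsLocalMax (fun t => v t ^ β * Real.exp (ψ t) * g t) 0) :
    β * (v' 0 / v 0) + ψ' 0 + g' 0 / g 0 = 0 ∧
      β * (v₂ / v 0 - (v' 0 / v 0) ^ 2) + ψ₂ + (g₂ / g 0 - (g' 0 / g 0) ^ 2) ≤ 0 := by
  have hvpos : ∀ᶠ t in nhds 0, 0 < v t := (hv 0).continuousAt.eventually (lt_mem_nhds hv₀)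
  have hgpos : ∀ᶠ t in nhds 0, 0 < g t := (hg 0).continuousAt.eventually (lt_mem_nhds hg₀)
  have hlog {t : ℝ} (ht : 0 < v t) (ht' : 0 < g t) :
      Real.log (v t ^ β * Real.exp (ψ t) * g t) = β * Real.log (v t) + ψ t + Real.log (g t) := by
    rw [Real.log_mul (by positivity) ht'.ne', Real.log_mul (by positivity) (by positivity),
      Real.log_exp, Real.log_pow]
  have hmin : IsLocalMin (fun t => -(β * Real.log (v t) + ψ t + Real.log (g t))) 0 := by
    filter_upwards [hmax, hvpos, hgpos] with t ht hvt hgt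
    rw [neg_le_neg_iff, ← hlog hvt hgt, ← hlog hv₀ hg₀]
    exact Real.log_le_log (by positivity) ht
  have hderiv : ∀ᶠ t in nhds 0, HasDerivAt (fun t => -(β * Real.log (v t) + ψ t + Real.log (g t)))
      (-(β * (v' t / v t) + ψ' t + g' t / g t)) t := by
    filter_upwards [hvpos, hgpos] with t hvt hgt
    exact ((((hv t).log hvt.ne').const_mul (β : ℝ)).add (hψ t)).add ((hg t).log hgt.ne') |>.neg
  have hderiv₂ : HasDerivAt (fun t => -(β * (v' t / v t) + ψ' t + g' t / g t))
      (-(β * (v₂ / v 0 - (v' 0 / v 0) ^ 2) + ψ₂ + (g₂ / g 0 - (g' 0 / g 0) ^ 2))) 0 := by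
    refine ((((hv'.div (hv 0) hv₀.ne').const_mul (β : ℝ)).add hψ').add
      (hg'.div (hg 0) hg₀.ne')).neg.congr_deriv ?_
    field_simp
  exact ⟨neg_eq_zero.1 (hmin.hasDerivAt_eq_zero hderiv.self_of_nhds),
    neg_nonneg.1 (second_deriv_nonneg_of_isLocalMin hderiv hderiv₂ hmin)⟩

lemma exp_half_mul_le_two {k r : ℝ} (h : k * r ≤ 1) : Real.exp (k / 2 * r) ≤ 2 := by
  have hsqrt : Real.exp (1 / 2) ≤ 2 := by
    refine le_of_sq_le_sq ?_ zero_le_two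
    rw [← Real.exp_nat_mul]
    norm_num
    linarith [Real.exp_one_lt_d9]
  exact (Real.exp_le_exp.2 (by linarith)).trans hsqrt

end OneVariable

section Pogorelov

open scoped RealInnerProductSpace

variable {ι : Type*} [Fintype ι] {E : Type*} [NormedAddCommGroup E] [InnerProductSpace ℝ E]
  {u : E → ℝ} {h k : ℝ} {β : ℕ} {x₀ e₀ : E}

/-- Pogorelov's test function `(h - u)^β exp(k |x|² / 2) u_ee` on the sublevel set `{u ≤ h}`. -/
def pogorelovTest (u : E → ℝ) (h k : ℝ) (β : ℕ) (x e : E) : ℝ :=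
  (h - u x) ^ β * Real.exp (k / 2 * ‖x‖ ^ 2) * hessian u x e e

/-- The point `x₀`, interior to the sublevel set `{u ≤ h}`, and the unit vector `e₀` maximise
Pogorelov's test function among all points of the sublevel set and all unit vectors. -/
structure IsPogorelovMax (u : E → ℝ) (h k : ℝ) (β : ℕ) (x₀ e₀ : E) : Prop where
  lt : u x₀ < h
  norm_eq_one : ‖e₀‖ = 1
  le : ∀ x e, u x ≤ h → ‖e‖ = 1 → pogorelovTest u h k β x e ≤ pogorelovTest u h k β x₀ e₀

namespace IsPogorelovMax

lemma of_hessian_le (hmax : IsPogorelovMax u h k β x₀ e₀) {e : E} (he : ‖e‖ = 1)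
    (hle : hessian u x₀ e₀ e₀ ≤ hessian u x₀ e e) : IsPogorelovMax u h k β x₀ e where
  lt := hmax.lt
  norm_eq_one := he
  le x e' hx he' := (hmax.le x e' hx he').trans <|
    mul_le_mul_of_nonneg_left hle (by have := sub_nonneg.2 hmax.lt.le; positivity)

/- The logarithm of the test function, along the line through `x₀` in direction `a`, has vanishing
first and nonpositive second derivative at `x₀`. -/
lemma deriv_test (hmax : IsPogorelovMax u h k β x₀ e₀) (hu : ContDiff ℝ 4 u)
    (hpos : 0 < hessian u x₀ e₀ e₀) (a : E) :
    dirDeriv a (fun y => hessian u y e₀ e₀) x₀ / hessian u x₀ e₀ e₀ =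
        β * (dirDeriv a u x₀ / (h - u x₀)) - k * ⟪x₀, a⟫ ∧
      hessian (fun y => hessian u y e₀ e₀) x₀ a a / hessian u x₀ e₀ e₀ + k * ‖a‖ ^ 2 ≤
        β * (hessian u x₀ a a / (h - u x₀) + (dirDeriv a u x₀ / (h - u x₀)) ^ 2) +
          (dirDeriv a (fun y => hessian u y e₀ e₀) x₀ / hessian u x₀ e₀ e₀) ^ 2 := by
  have hu₂ : ContDiff ℝ 2 u := hu.of_le (by norm_num)
  have hw : ContDiff ℝ 2 (fun y => hessian u y e₀ e₀) :=
    contDiff_hessian_apply hu (by norm_num) e₀ e₀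
  have hdiff {f : E → ℝ} (hf : ContDiff ℝ 2 f) : Differentiable ℝ f :=
    hf.differentiable (by norm_num)
  have hψ (t : ℝ) : HasDerivAt (fun t : ℝ => k / 2 * ‖x₀ + t • a‖ ^ 2)
      (k * ⟪x₀ + t • a, a⟫) t :=
    (((hasDerivAt_add_smul x₀ a t).norm_sq).const_mul (k / 2)).congr_deriv (by ring)
  have hψ' : HasDerivAt (fun t : ℝ => k * ⟪x₀ + t • a, a⟫) (k * ‖a‖ ^ 2) 0 := by
    have := ((hasDerivAt_add_smul x₀ a 0).inner ℝ (hasDerivAt_const 0 a)).const_mul k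
    simpa using this
  have hlocal : IsLocalMax (fun t : ℝ => (h - u (x₀ + t • a)) ^ β *
      Real.exp (k / 2 * ‖x₀ + t • a‖ ^ 2) * hessian u (x₀ + t • a) e₀ e₀) 0 := by
    have hlt : ∀ᶠ t in nhds (0 : ℝ), u (x₀ + t • a) < h :=
      (hasDerivAt_comp_add_smul (hdiff hu₂) x₀ a 0).continuousAt.eventually
        (gt_mem_nhds (by simpa using hmax.lt))
    filter_upwards [hlt] with t ht
    simpa [pogorelovTest] using hmax.le (x₀ + t • a) e₀ ht.le hmax.norm_eq_one
  have hsub (t : ℝ) := (hasDerivAt_comp_add_smul (hdiff hu₂) x₀ a t).const_sub h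
  obtain ⟨hfirst, hsecond⟩ := log_deriv_test_of_isLocalMax hsub
    (hasDerivAt_dirDeriv_add_smul hu₂ x₀ a 0).neg hψ hψ'
    (hasDerivAt_comp_add_smul (hdiff hw) x₀ a) (hasDerivAt_dirDeriv_add_smul hw x₀ a 0)
    (by simpa using hmax.lt) (by simpa using hpos) hlocal
  simp only [zero_smul, add_zero, neg_div, neg_sq] at hfirst hsecond
  constructor <;> linarith

lemma pow_mul_hessian_le (hmax : IsPogorelovMax u h k β x₀ e₀) (hpos : 0 < hessian u x₀ e₀ e₀)
    (hk₀ : 0 ≤ k) (hk : k * ‖x₀‖ ^ 2 ≤ 1) {x e : E} (hx : u x ≤ h) (he : ‖e‖ = 1) :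
    (h - u x) ^ β * hessian u x e e ≤ (h - u x₀) ^ β * (2 * hessian u x₀ e₀ e₀) := by
  have hv : 0 ≤ h - u x := sub_nonneg.2 hx
  have hv₀ : 0 ≤ h - u x₀ := sub_nonneg.2 hmax.lt.le
  obtain hneg | hnonneg := le_total (hessian u x e e) 0
  · exact (mul_nonpos_of_nonneg_of_nonpos (pow_nonneg hv β) hneg).trans (by positivity)
  calc (h - u x) ^ β * hessian u x e e = (h - u x) ^ β * 1 * hessian u x e e := by ring
    _ ≤ pogorelovTest u h k β x e := by
        unfold pogorelovTest
        gcongr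
        exact Real.one_le_exp (by positivity)
    _ ≤ pogorelovTest u h k β x₀ e₀ := hmax.le x e hx he
    _ ≤ (h - u x₀) ^ β * 2 * hessian u x₀ e₀ e₀ := by
        unfold pogorelovTest
        gcongr
        exact exp_half_mul_le_two hk
    _ = (h - u x₀) ^ β * (2 * hessian u x₀ e₀ e₀) := by ring

lemma hessian_le_two_mul (hmax : IsPogorelovMax u h k β x₀ e₀) (hpos : 0 < hessian u x₀ e₀ e₀)
    (hk₀ : 0 ≤ k) (hk : k * ‖x₀‖ ^ 2 ≤ 1) {x e : E} (hx : u x ≤ u x₀) (he : ‖e‖ = 1) :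
    hessian u x e e ≤ 2 * hessian u x₀ e₀ e₀ := by
  obtain hneg | hnonneg := le_total (hessian u x e e) 0
  · exact hneg.trans (by positivity)
  have hv₀ : 0 < h - u x₀ := sub_pos.2 hmax.lt
  refine le_of_mul_le_mul_left ?_ (pow_pos hv₀ β)
  exact le_trans (by gcongr) (hmax.pow_mul_hessian_le hpos hk₀ hk (hx.trans hmax.lt.le) he)

end IsPogorelovMax

lemma tendsto_add_smul_cobounded {x e : E} (he : ‖e‖ = 1) :
    Filter.Tendsto (fun t : ℝ => x + t • e) Filter.atTop (Bornology.cobounded E) := by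
  rw [← tendsto_norm_atTop_iff_cobounded]
  refine Filter.tendsto_atTop_mono' _ ?_ (Filter.tendsto_atTop_add_const_right _ (-‖x‖)
    Filter.tendsto_id)
  filter_upwards [Filter.eventually_ge_atTop 0] with t ht
  have hnorm : ‖t • e‖ = t := by rw [norm_smul, he, mul_one, Real.norm_of_nonneg ht]
  have := norm_sub_le (x + t • e) x
  rw [add_sub_cancel_left, hnorm] at this
  simp only [id]
  linarith

/- Descend from `x₀` against the gradient: the second derivatives met on the way are controlled by
the one at the maximum, and `u` cannot fall below its infimum. -/
lemma IsPogorelovMax.sq_norm_gradient_le [CompleteSpace E] {d : ℝ}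
    (hmax : IsPogorelovMax u h k β x₀ e₀) (hu : ContDiff ℝ 2 u) (hpos : 0 < hessian u x₀ e₀ e₀)
    (hk₀ : 0 ≤ k) (hk : k * ‖x₀‖ ^ 2 ≤ 1)
    (hcoer : Filter.Tendsto u (Bornology.cobounded E) Filter.atTop) (hlow : ∀ x, h - u x ≤ d) :
    ‖gradient u x₀‖ ^ 2 ≤ 4 * hessian u x₀ e₀ e₀ * d := by
  have hd : 0 < d := (sub_pos.2 hmax.lt).trans_le (hlow x₀)
  obtain hzero | hne := eq_or_ne (gradient u x₀) 0
  · rw [hzero, norm_zero, zero_pow two_ne_zero]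
    positivity
  set e : E := -(‖gradient u x₀‖⁻¹ • gradient u x₀)
  have he : ‖e‖ = 1 := by
    rw [norm_neg, norm_smul, norm_inv, norm_norm, inv_mul_cancel₀ (norm_ne_zero_iff.2 hne)]
  have hslope : dirDeriv e u x₀ = -‖gradient u x₀‖ := by
    rw [dirDeriv, ← inner_gradient_left, inner_neg_right, real_inner_smul_right,
      real_inner_self_eq_norm_sq, sq, inv_mul_cancel_left₀ (norm_ne_zero_iff.2 hne)]
  obtain ⟨T, hT, hT₀⟩ := ((hcoer.comp (tendsto_add_smul_cobounded he)).eventually_ge_atTop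
    (u x₀) |>.and (Filter.eventually_gt_atTop 0)).exists
  obtain ⟨t, ht⟩ := exists_sq_deriv_le
    (hasDerivAt_comp_add_smul (hu.differentiable (by norm_num)) x₀ e)
    (hasDerivAt_dirDeriv_add_smul hu x₀ e) (by simp [hslope])
    (fun t ht => hmax.hessian_le_two_mul hpos hk₀ hk (by simpa using ht) he) hT₀ (by simpa using hT)
  simp only [zero_smul, add_zero, hslope, neg_sq] at ht
  calc ‖gradient u x₀‖ ^ 2 ≤ 4 * hessian u x₀ e₀ e₀ * (u x₀ - u (x₀ + t • e)) := by linarith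
    _ ≤ 4 * hessian u x₀ e₀ e₀ * d := by
        gcongr
        linarith [hlow (x₀ + t • e), hmax.lt]

end Pogorelov

section PogorelovBound

open scoped RealInnerProductSpace

variable {ι : Type*} [Fintype ι] {E : Type*} [NormedAddCommGroup E] [InnerProductSpace ℝ E]
  {u : E → ℝ} {b : OrthonormalBasis ι ℝ E} {lam a : ι → ℝ} {x₀ : E} {h k N K : ℝ} {β q : ℕ} {m : ι}

/-- A supporting frame with the inequalities needed for Pogorelov's estimate: the homogeneity bound
`Σ aᵢ λᵢ ≤ N`, a bound of the eigenvalues by a power of the trace `Σ aᵢ`, and, up to the error `K`,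
domination of the gradient terms by the concavity terms that involve a largest eigenvalue. -/
structure IsPogorelovFrame (N K : ℝ) (q : ℕ) (u : E → ℝ) (x : E) (b : OrthonormalBasis ι ℝ E)
    (lam a : ι → ℝ) : Prop extends IsSupportingFrame u x b lam a where
  sum_mul_le : ∑ i, a i * lam i ≤ N
  le_pow : ∀ i, lam i ≤ (∑ j, a j) ^ q
  sub_le : ∀ m, (∀ i, lam i ≤ lam m) → 0 < lam m → ∀ i,
    4 / 3 * (a i - K / lam m) ≤ 2 * lam m * ((a i - a m) / (lam m - lam i))

/- The first-order condition `y = βd - kξ` trades `βd²` for a third of `y²`. -/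
lemma two_thirds_mul_add_le {β k y d ξ s H : ℝ} (hβ : 6 ≤ β) (hξ : k ^ 2 * ξ ^ 2 ≤ k)
    (hy : y = β * d - k * ξ) (hH : H + k ≤ β * (s + d ^ 2) + y ^ 2) :
    2 / 3 * k + H ≤ β * s + 4 / 3 * y ^ 2 := by
  have hd : 6 * (β * d ^ 2) ≤ 2 * y ^ 2 + 2 * k :=
    calc 6 * (β * d ^ 2) ≤ β * (β * d ^ 2) := by
          have : 0 ≤ β * d ^ 2 := by positivity
          gcongr
      _ = (y + k * ξ) ^ 2 := by rw [hy]; ring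
      _ ≤ 2 * y ^ 2 + 2 * k := by linarith [sq_nonneg (y - k * ξ)]
  linarith

namespace IsPogorelovMax

lemma two_thirds_mul_sum_le (hmax : IsPogorelovMax u h k β x₀ (b m))
    (hframe : IsSupportingFrame u x₀ b lam a) (hu : ContDiff ℝ 4 u) (hpos : 0 < lam m)
    (hβ : 6 ≤ β) (hk₀ : 0 ≤ k) (hk : k * ‖x₀‖ ^ 2 ≤ 1) :
    2 / 3 * k * ∑ i, a i ≤ β * ((∑ i, a i * lam i) / (h - u x₀)) +
      ∑ i, (4 / 3 * a i - 2 * lam m * ((a i - a m) / (lam m - lam i))) *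
        (dirDeriv (b i) (fun y => hessian u y (b m) (b m)) x₀ / lam m) ^ 2 := by
  have hΛ : hessian u x₀ (b m) (b m) = lam m := hframe.isEigenframe.apply_basis_self m
  have hpoint (i : ι) : 2 / 3 * k +
      hessian (fun y => hessian u y (b m) (b m)) x₀ (b i) (b i) / lam m ≤
        β * (lam i / (h - u x₀)) +
          4 / 3 * (dirDeriv (b i) (fun y => hessian u y (b m) (b m)) x₀ / lam m) ^ 2 := by
    obtain ⟨hfirst, hsecond⟩ := hmax.deriv_test hu (hΛ ▸ hpos) (b i)
    rw [hΛ] at hfirst hsecond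
    rw [b.norm_eq_one, one_pow, mul_one, hframe.isEigenframe.apply_basis_self] at hsecond
    have hξ : ⟪x₀, b i⟫ ^ 2 ≤ ‖x₀‖ ^ 2 := by
      rw [← sq_abs]
      gcongr
      simpa using abs_real_inner_le_norm x₀ (b i)
    refine two_thirds_mul_add_le (by exact_mod_cast hβ) ?_ hfirst hsecond
    calc k ^ 2 * ⟪x₀, b i⟫ ^ 2 ≤ k ^ 2 * ‖x₀‖ ^ 2 := by gcongr
      _ = k * (k * ‖x₀‖ ^ 2) := by ring
      _ ≤ k := mul_le_of_le_one_right hk₀ hk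
  have hweighted := Finset.sum_le_sum fun i (_ : i ∈ Finset.univ) =>
    mul_le_mul_of_nonneg_left (hpoint i) (hframe.nonneg i)
  have hconc : ∑ i, 2 * lam m * ((a i - a m) / (lam m - lam i)) *
        (dirDeriv (b i) (fun y => hessian u y (b m) (b m)) x₀ / lam m) ^ 2 ≤
      ∑ i, a i * (hessian (fun y => hessian u y (b m) (b m)) x₀ (b i) (b i) / lam m) := by
    refine le_of_eq_of_le ?_ (((div_le_div_iff_of_pos_right hpos).2
      (hframe.sum_div_mul_dirDeriv_sq_le hu m)).trans_eq ?_)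
    · rw [Finset.sum_div]
      refine Finset.sum_congr rfl fun i _ => ?_
      field_simp
    · simp only [Finset.sum_div, mul_div_assoc]
  calc 2 / 3 * k * ∑ i, a i = ∑ i, a i * (2 / 3 * k +
          hessian (fun y => hessian u y (b m) (b m)) x₀ (b i) (b i) / lam m) -
        ∑ i, a i * (hessian (fun y => hessian u y (b m) (b m)) x₀ (b i) (b i) / lam m) := by
        simp only [mul_add, Finset.sum_add_distrib, add_sub_cancel_right, ← Finset.sum_mul]
        ring
    _ ≤ _ := sub_le_sub hweighted hconc
    _ = _ := by
        rw [← Finset.sum_sub_distrib, Finset.sum_div, Finset.mul_sum, ← Finset.sum_add_distrib]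
        exact Finset.sum_congr rfl fun i _ => by ring

lemma sum_dirDeriv_div_sq_le [CompleteSpace E] (hmax : IsPogorelovMax u h k β x₀ (b m))
    (hframe : IsSupportingFrame u x₀ b lam a) (hu : ContDiff ℝ 4 u) (hpos : 0 < lam m)
    (hk₀ : 0 ≤ k) (hk : k * ‖x₀‖ ^ 2 ≤ 1) :
    ∑ i, (dirDeriv (b i) (fun y => hessian u y (b m) (b m)) x₀ / lam m) ^ 2 ≤
      2 * (β / (h - u x₀)) ^ 2 * ‖gradient u x₀‖ ^ 2 + 2 * k := by
  have hΛ : hessian u x₀ (b m) (b m) = lam m := hframe.isEigenframe.apply_basis_self m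
  have hpoint (i : ι) : (dirDeriv (b i) (fun y => hessian u y (b m) (b m)) x₀ / lam m) ^ 2 ≤
      2 * (β / (h - u x₀)) ^ 2 * ⟪gradient u x₀, b i⟫ ^ 2 + 2 * k ^ 2 * ⟪x₀, b i⟫ ^ 2 := by
    have hfirst := (hmax.deriv_test hu (hΛ ▸ hpos) (b i)).1
    rw [hΛ] at hfirst
    rw [hfirst, inner_gradient_left, ← dirDeriv]
    calc (β * (dirDeriv (b i) u x₀ / (h - u x₀)) - k * ⟪x₀, b i⟫) ^ 2
      _ ≤ 2 * (β * (dirDeriv (b i) u x₀ / (h - u x₀))) ^ 2 + 2 * (k * ⟪x₀, b i⟫) ^ 2 := by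
          linarith [sq_nonneg (β * (dirDeriv (b i) u x₀ / (h - u x₀)) + k * ⟪x₀, b i⟫)]
      _ = _ := by ring
  calc _ ≤ 2 * (β / (h - u x₀)) ^ 2 * ‖gradient u x₀‖ ^ 2 + 2 * k ^ 2 * ‖x₀‖ ^ 2 := by
        simp only [← b.sum_sq_inner_left]
        rw [Finset.mul_sum, Finset.mul_sum, ← Finset.sum_add_distrib]
        exact Finset.sum_le_sum fun i _ => hpoint i
    _ = 2 * (β / (h - u x₀)) ^ 2 * ‖gradient u x₀‖ ^ 2 + 2 * k * (k * ‖x₀‖ ^ 2) := by ring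
    _ ≤ 2 * (β / (h - u x₀)) ^ 2 * ‖gradient u x₀‖ ^ 2 + 2 * k := by
        linarith [mul_le_mul_of_nonneg_left hk hk₀]

lemma two_thirds_mul_sum_le_of_isPogorelovFrame [CompleteSpace E]
    (hmax : IsPogorelovMax u h k β x₀ (b m))
    (hframe : IsPogorelovFrame N K q u x₀ b lam a) (hu : ContDiff ℝ 4 u)
    (hm : ∀ i, lam i ≤ lam m) (hpos : 0 < lam m) (hK : 0 ≤ K)
    (hβ : 6 ≤ β) (hk₀ : 0 ≤ k) (hk : k * ‖x₀‖ ^ 2 ≤ 1) :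
    2 / 3 * k * ∑ i, a i ≤ β * (N / (h - u x₀)) +
      4 / 3 * (K / lam m) * (2 * (β / (h - u x₀)) ^ 2 * ‖gradient u x₀‖ ^ 2 + 2 * k) := by
  have hv : 0 < h - u x₀ := sub_pos.2 hmax.lt
  refine (hmax.two_thirds_mul_sum_le hframe.toIsSupportingFrame hu hpos hβ hk₀ hk).trans
    (add_le_add ?_ ?_)
  · gcongr
    exact hframe.sum_mul_le
  refine le_trans ?_ (mul_le_mul_of_nonneg_left
    (hmax.sum_dirDeriv_div_sq_le hframe.toIsSupportingFrame hu hpos hk₀ hk) (by positivity))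
  rw [Finset.mul_sum]
  gcongr with i
  linarith [hframe.sub_le m hm hpos i]

end IsPogorelovMax

end PogorelovBound

section QuadraticLowerBound

variable {E : Type*} [NormedAddCommGroup E] {u : E → ℝ} {C h : ℝ}

lemma sub_le_two_mul_of_quadratic_le (hC : 0 < C)
    (hquad : ∀ x, C⁻¹ * ‖x‖ ^ 2 - C ≤ u x) (hCh : C ≤ h) (x : E) : h - u x ≤ 2 * h := by
  have : 0 ≤ C⁻¹ * ‖x‖ ^ 2 := by positivity
  linarith [hquad x]

lemma inv_mul_sq_norm_le_one_of_quadratic_le (hC : 0 < C)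
    (hquad : ∀ x, C⁻¹ * ‖x‖ ^ 2 - C ≤ u x) (hCh : C ≤ h) {x : E} (hx : u x ≤ h) :
    (2 * C * h)⁻¹ * ‖x‖ ^ 2 ≤ 1 := by
  have hsq : C⁻¹ * ‖x‖ ^ 2 ≤ 2 * h := by linarith [hquad x]
  have hh : 0 < 2 * h := by linarith
  calc (2 * C * h)⁻¹ * ‖x‖ ^ 2 = (2 * h)⁻¹ * (C⁻¹ * ‖x‖ ^ 2) := by
        rw [mul_right_comm, mul_inv]
        ring
    _ ≤ 1 := inv_mul_le_one_of_le₀ hsq hh.le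

lemma tendsto_cobounded_of_quadratic_le (hC : 0 < C)
    (hquad : ∀ x, C⁻¹ * ‖x‖ ^ 2 - C ≤ u x) :
    Filter.Tendsto u (Bornology.cobounded E) Filter.atTop := by
  refine Filter.tendsto_atTop_mono hquad (Filter.tendsto_atTop_add_const_right _ (-C) ?_)
  exact ((Filter.tendsto_pow_atTop two_ne_zero).comp tendsto_norm_cobounded_atTop).const_mul_atTop
    (inv_pos.2 hC)

end QuadraticLowerBound

section PogorelovBound

open scoped RealInnerProductSpace

variable {ι : Type*} [Fintype ι] {E : Type*} [NormedAddCommGroup E] [InnerProductSpace ℝ E]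
  {u : E → ℝ} {b : OrthonormalBasis ι ℝ E} {lam a : ι → ℝ} {x₀ : E} {h k N K : ℝ} {β q : ℕ} {m : ι}

lemma le_mul_sq_div_of_two_thirds_mul_le {S G C Λ v β : ℝ} (hC : 0 < C) (hh : 0 < h) (hv : 0 < v)
    (hvh : v ≤ 2 * h) (hΛ : 1 ≤ Λ) (hN : 0 ≤ N) (hK : 0 ≤ K) (hβ : 0 ≤ β) (hG : G ≤ 8 * Λ * h)
    (hS : 2 / 3 * (2 * C * h)⁻¹ * S ≤
      β * (N / v) + 4 / 3 * (K / Λ) * (2 * (β / v) ^ 2 * G + 2 * (2 * C * h)⁻¹)) :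
    S ≤ (6 * C * β * N + 64 * C * K * β ^ 2 + 16 * K) * (h / v) ^ 2 := by
  have hr : 1 ≤ 2 * (h / v) := by rwa [← mul_div_assoc, one_le_div hv]
  calc S = 3 * C * h * (2 / 3 * (2 * C * h)⁻¹ * S) := by field_simp
    _ ≤ 3 * C * h * (β * (N / v) +
          4 / 3 * (K / Λ) * (2 * (β / v) ^ 2 * (8 * Λ * h) + 2 * (2 * C * h)⁻¹)) := by
        refine mul_le_mul_of_nonneg_left (hS.trans ?_) (by positivity)
        gcongr
    _ = 3 * C * β * N * (h / v * 1) + 64 * C * K * β ^ 2 * (h / v) ^ 2 + 4 * (K / Λ) * 1 ^ 2 := by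
        field_simp
        ring
    _ ≤ 3 * C * β * N * (h / v * (2 * (h / v))) + 64 * C * K * β ^ 2 * (h / v) ^ 2 +
          4 * K * (2 * (h / v)) ^ 2 := by
        gcongr
        exact div_le_self hK hΛ
    _ = _ := by ring

/- The powers of `ρ = v / h` in the test function absorb those of `ρ⁻¹` in the trace bound. -/
lemma pow_mul_le_of_le_pow {ρ Λ S A : ℝ} (hρ : 0 < ρ) (hρ' : ρ ≤ 2) (hS₀ : 0 ≤ S)
    (hS : 1 ≤ Λ → S ≤ A * (ρ⁻¹) ^ 2) (hΛ : Λ ≤ S ^ q) (hA : 0 ≤ A) :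
    ρ ^ (2 * q + 6) * Λ ≤ 64 * A ^ q + 2 ^ (2 * q + 6) := by
  obtain hone | hone := le_total Λ 1
  · calc ρ ^ (2 * q + 6) * Λ ≤ ρ ^ (2 * q + 6) * 1 := by gcongr
      _ ≤ 2 ^ (2 * q + 6) * 1 := by gcongr
      _ ≤ 64 * A ^ q + 2 ^ (2 * q + 6) := by
          rw [mul_one]
          exact le_add_of_nonneg_left (by positivity)
  · calc ρ ^ (2 * q + 6) * Λ ≤ ρ ^ (2 * q + 6) * (A * (ρ⁻¹) ^ 2) ^ q := by
          gcongr
          exact hΛ.trans (by gcongr; exact hS hone)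
      _ = ρ ^ 6 * A ^ q := by
          rw [mul_pow, ← pow_mul, pow_add, inv_pow]
          field_simp
      _ ≤ 2 ^ 6 * A ^ q := by gcongr
      _ ≤ 64 * A ^ q + 2 ^ (2 * q + 6) := by
          norm_num

/-- The trace constant of Pogorelov's estimate for the exponent `2 q + 6`. -/
def pogorelovConst (C N K : ℝ) (q : ℕ) : ℝ :=
  6 * C * (2 * q + 6) * N + 64 * C * K * (2 * q + 6) ^ 2 + 16 * K

lemma IsPogorelovMax.div_pow_mul_le [CompleteSpace E] {C : ℝ}
    (hmax : IsPogorelovMax u h (2 * C * h)⁻¹ (2 * q + 6) x₀ (b m))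
    (hframe : IsPogorelovFrame N K q u x₀ b lam a) (hu : ContDiff ℝ 4 u)
    (hm : ∀ i, lam i ≤ lam m) (hN : 0 ≤ N) (hK : 0 ≤ K) (hC : 0 < C)
    (hquad : ∀ x, C⁻¹ * ‖x‖ ^ 2 - C ≤ u x) (hCh : C ≤ h) :
    ((h - u x₀) / h) ^ (2 * q + 6) * lam m ≤
      64 * pogorelovConst C N K q ^ q + 2 ^ (2 * q + 6) := by
  have hh : 0 < h := hC.trans_le hCh
  have hv : 0 < h - u x₀ := sub_pos.2 hmax.lt
  have hΛ : hessian u x₀ (b m) (b m) = lam m := hframe.isEigenframe.apply_basis_self m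
  have hk := inv_mul_sq_norm_le_one_of_quadratic_le hC hquad hCh hmax.lt.le
  have hvh := sub_le_two_mul_of_quadratic_le hC hquad hCh
  refine pow_mul_le_of_le_pow (div_pos hv hh) ((div_le_iff₀ hh).2 (hvh x₀))
    (Finset.sum_nonneg fun i _ => hframe.nonneg i) (fun hone => ?_) (hframe.le_pow m)
    (by unfold pogorelovConst; positivity)
  have hpos : 0 < lam m := one_pos.trans_le hone
  have hgrad := hmax.sq_norm_gradient_le (hu.of_le (by norm_num)) (hΛ ▸ hpos) (by positivity)
    hk (tendsto_cobounded_of_quadratic_le hC hquad) hvh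
  rw [inv_div]
  refine le_mul_sq_div_of_two_thirds_mul_le (G := ‖gradient u x₀‖ ^ 2) hC hh hv (hvh x₀) hone hN hK
    (by positivity) (by rw [hΛ] at hgrad; linarith) ?_
  have := hmax.two_thirds_mul_sum_le_of_isPogorelovFrame hframe hu hm hpos hK (by omega)
    (by positivity) hk
  exact_mod_cast this

lemma exists_isPogorelovMax [FiniteDimensional ℝ E] (hu : ContDiff ℝ 2 u)
    (hcoer : Filter.Tendsto u (Bornology.cobounded E) Filter.atTop) (hβ : β ≠ 0) {x e : E}
    (hx : u x < h) (he : ‖e‖ = 1) (hpos : 0 < hessian u x e e) :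
    ∃ x₀ e₀, IsPogorelovMax u h k β x₀ e₀ ∧ 0 < hessian u x₀ e₀ e₀ := by
  have hcompact : IsCompact {y | u y ≤ h} := by
    refine Metric.isCompact_of_isClosed_isBounded (isClosed_le hu.continuous continuous_const) ?_
    rw [Bornology.isBounded_def]
    filter_upwards [hcoer.eventually_gt_atTop h] with y hy using not_le.2 hy
  have hcont : Continuous fun z : E × E => pogorelovTest u h k β z.1 z.2 := by
    have := (contDiff_hessian (k := 0) hu (by norm_num)).continuous
    have := hu.continuous
    unfold pogorelovTest
    fun_prop
  obtain ⟨⟨x₀, e₀⟩, ⟨hx₀, he₀⟩, hle⟩ := (hcompact.prod (isCompact_sphere (0 : E) 1)).exists_isMaxOn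
    ⟨(x, e), hx.le, by simpa using he⟩ hcont.continuousOn
  have hle' {y f : E} (hy : u y ≤ h) (hf : ‖f‖ = 1) :
      pogorelovTest u h k β y f ≤ pogorelovTest u h k β x₀ e₀ :=
    hle (show (y, f) ∈ {y | u y ≤ h} ×ˢ Metric.sphere 0 1 from ⟨hy, by simpa using hf⟩)
  have htest : 0 < (h - u x₀) ^ β * Real.exp (k / 2 * ‖x₀‖ ^ 2) * hessian u x₀ e₀ e₀ :=
    lt_of_lt_of_le (mul_pos (mul_pos (pow_pos (sub_pos.2 hx) β) (Real.exp_pos _)) hpos)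
      (hle' hx.le he)
  have hlt : u x₀ < h := by
    refine lt_of_le_of_ne hx₀ fun heq => ?_
    simp [heq, hβ] at htest
  have hfactor : 0 < (h - u x₀) ^ β * Real.exp (k / 2 * ‖x₀‖ ^ 2) :=
    mul_pos (pow_pos (sub_pos.2 hlt) β) (Real.exp_pos _)
  exact ⟨x₀, e₀, ⟨hlt, by simpa using he₀, fun y f => hle'⟩, pos_of_mul_pos_right htest hfactor.le⟩

lemma div_pow_mul_hessian_le [FiniteDimensional ℝ E] (hu : ContDiff ℝ 4 u) (hN : 0 ≤ N)
    (hK : 0 ≤ K) {C : ℝ} (hC : 0 < C) (hquad : ∀ x, C⁻¹ * ‖x‖ ^ 2 - C ≤ u x)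
    (hframe : ∀ x, ∃ (b : OrthonormalBasis ι ℝ E) (lam a : ι → ℝ),
      IsPogorelovFrame N K q u x b lam a) (hCh : C ≤ h) {x e : E} (hx : u x < h) (he : ‖e‖ = 1) :
    ((h - u x) / h) ^ (2 * q + 6) * hessian u x e e ≤
      2 * (64 * pogorelovConst C N K q ^ q + 2 ^ (2 * q + 6)) := by
  have hh : 0 < h := hC.trans_le hCh
  have hconst : 0 ≤ pogorelovConst C N K q := by unfold pogorelovConst; positivity
  have : 0 < (h - u x) / h := div_pos (sub_pos.2 hx) hh
  obtain hneg | hpos := le_or_gt (hessian u x e e) 0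
  · exact (mul_nonpos_of_nonneg_of_nonpos (by positivity) hneg).trans (by positivity)
  obtain ⟨x₀, e₀, hmax, hpos₀⟩ := exists_isPogorelovMax (k := (2 * C * h)⁻¹) (β := 2 * q + 6)
    (hu.of_le (by norm_num)) (tendsto_cobounded_of_quadratic_le hC hquad) (by omega) hx he hpos
  obtain ⟨b, lam, a, hb⟩ := hframe x₀
  have : Nontrivial E := ⟨e₀, 0, by rintro rfl; simp at hpos₀⟩
  have : Nonempty ι := b.toBasis.index_nonempty
  obtain ⟨m, hm⟩ := Finite.exists_max lam
  have hle : hessian u x₀ e₀ e₀ ≤ lam m := by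
    simpa [hmax.norm_eq_one] using hb.isEigenframe.apply_self_le hm e₀
  have hmax' : IsPogorelovMax u h (2 * C * h)⁻¹ (2 * q + 6) x₀ (b m) :=
    hmax.of_hessian_le (b.norm_eq_one m) (hle.trans_eq (hb.isEigenframe.apply_basis_self m).symm)
  have hΛ : hessian u x₀ (b m) (b m) = lam m := hb.isEigenframe.apply_basis_self m
  have hcompare := hmax'.pow_mul_hessian_le (hΛ ▸ hpos₀.trans_le hle) (by positivity)
    (inv_mul_sq_norm_le_one_of_quadratic_le hC hquad hCh hmax.lt.le) hx.le he
  rw [hΛ] at hcompare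
  calc ((h - u x) / h) ^ (2 * q + 6) * hessian u x e e
      = (h - u x) ^ (2 * q + 6) * hessian u x e e / h ^ (2 * q + 6) := by
        rw [div_pow, div_mul_eq_mul_div]
    _ ≤ (h - u x₀) ^ (2 * q + 6) * (2 * lam m) / h ^ (2 * q + 6) := by gcongr
    _ = 2 * (((h - u x₀) / h) ^ (2 * q + 6) * lam m) := by rw [div_pow]; ring
    _ ≤ _ := by
        gcongr
        exact hmax'.div_pow_mul_le hb hu hm hN hK hC hquad hCh

lemma exists_hessian_le [FiniteDimensional ℝ E] (hu : ContDiff ℝ 4 u) (hN : 0 ≤ N) (hK : 0 ≤ K)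
    {C : ℝ} (hC : 0 < C) (hquad : ∀ x, C⁻¹ * ‖x‖ ^ 2 - C ≤ u x)
    (hframe : ∀ x, ∃ (b : OrthonormalBasis ι ℝ E) (lam a : ι → ℝ),
      IsPogorelovFrame N K q u x b lam a) :
    ∃ C₀ > 0, ∀ x e, ‖e‖ = 1 → hessian u x e e ≤ C₀ := by
  have hconst : 0 ≤ pogorelovConst C N K q := by unfold pogorelovConst; positivity
  refine ⟨2 * (64 * pogorelovConst C N K q ^ q + 2 ^ (2 * q + 6)), by positivity, fun x e he => ?_⟩
  have hlim : Filter.Tendsto (fun h => ((h - u x) / h) ^ (2 * q + 6) * hessian u x e e)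
      Filter.atTop (nhds (hessian u x e e)) := by
    have hratio : Filter.Tendsto (fun h => (h - u x) / h) Filter.atTop (nhds 1) := by
      have : Filter.Tendsto (fun h => 1 - u x / h) Filter.atTop (nhds (1 - 0)) :=
        (tendsto_const_nhds.div_atTop Filter.tendsto_id).const_sub 1
      rw [sub_zero] at this
      refine this.congr' ?_
      filter_upwards [Filter.eventually_ne_atTop 0] with h hh
      rw [sub_div, div_self hh]
    simpa using (hratio.pow (2 * q + 6)).mul_const (hessian u x e e)
  refine le_of_tendsto hlim ?_
  filter_upwards [Filter.eventually_gt_atTop (u x), Filter.eventually_ge_atTop C] with h hx hCh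
  exact div_pow_mul_hessian_le hu hN hK hC hquad hframe hCh hx he

end PogorelovBound

section Liouville

variable {n p : ℕ} {u : EuclideanSpace ℝ (Fin n) → ℝ}

lemma isSupportingFrame_pMACoeff (hu : ContDiff ℝ 2 u) (hcone : ∀ x, hessEigen u x ∈ GammaHat n p)
    (heq : ∀ x, pMA n p (hessEigen u x) = 1) {x : EuclideanSpace ℝ (Fin n)}
    {b : OrthonormalBasis (Fin n) ℝ (EuclideanSpace ℝ (Fin n))}
    (hb : IsEigenframe (hessian u x) b (hessEigen u x)) :
    IsSupportingFrame u x b (hessEigen u x) (pMACoeff p (hessEigen u x)) where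
  isEigenframe := hb
  nonneg := pMACoeff_nonneg (hcone x)
  sum_le y c := by
    obtain ⟨b', hb'⟩ := exists_isEigenframe_hessian hu y
    exact sum_pMACoeff_mul_self_le_of_isEigenframe hb' (hcone x) (hcone y)
      ((heq x).trans (heq y).symm).le c

lemma isPogorelovFrame_pMACoeff (hpn : p ≤ n) (hu : ContDiff ℝ 2 u)
    (hconv : ∀ x, hessEigen u x ∈ GammaHat n (p - 1)) (heq : ∀ x, pMA n p (hessEigen u x) = 1)
    {x : EuclideanSpace ℝ (Fin n)} {b : OrthonormalBasis (Fin n) ℝ (EuclideanSpace ℝ (Fin n))}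
    (hb : IsEigenframe (hessian u x) b (hessEigen u x)) :
    IsPogorelovFrame (n.choose p) (2 * p * n.choose p) (n.choose p - 1) u x b (hessEigen u x)
      (pMACoeff p (hessEigen u x)) where
  toIsSupportingFrame :=
    isSupportingFrame_pMACoeff hu (fun y => gammaHat_pred_subset n p (hconv y)) heq hb
  sum_mul_le := (sum_pMACoeff_mul_self (gammaHat_pred_subset n p (hconv x))).le
  le_pow := le_sum_pMACoeff_pow hpn (hconv x) (heq x)
  sub_le _ := pMACoeff_sub_le (hconv x)

lemma exists_hessian_le_of_pMA_eq_one (hpn : p ≤ n) (hu : ContDiff ℝ 4 u)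
    (hconv : ∀ x, hessEigen u x ∈ GammaHat n (p - 1)) (heq : ∀ x, pMA n p (hessEigen u x) = 1)
    (hquad : QuadraticGrowth u) : ∃ C₀ > 0, ∀ x e, ‖e‖ = 1 → hessian u x e e ≤ C₀ := by
  obtain ⟨C, hC, hgrowth⟩ := hquad
  have hu₂ : ContDiff ℝ 2 u := hu.of_le (by norm_num)
  have hframe (x : EuclideanSpace ℝ (Fin n)) :
      ∃ (b : OrthonormalBasis (Fin n) ℝ (EuclideanSpace ℝ (Fin n))) (lam a : Fin n → ℝ),
        IsPogorelovFrame (n.choose p) (2 * p * n.choose p) (n.choose p - 1) u x b lam a := by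
    obtain ⟨b, hb⟩ := exists_isEigenframe_hessian hu₂ x
    exact ⟨b, _, _, isPogorelovFrame_pMACoeff hpn hu₂ hconv heq hb⟩
  exact exists_hessian_le hu (by positivity) (by positivity) hC hgrowth hframe

lemma hasEllipticSupport_of_hessian_le (hpn : p ≤ n) (hu : ContDiff ℝ 2 u)
    (hcone : ∀ x, hessEigen u x ∈ GammaHat n p) (heq : ∀ x, pMA n p (hessEigen u x) = 1) {C : ℝ}
    (hC : ∀ x e, ‖e‖ = 1 → hessian u x e e ≤ C) :
    HasEllipticSupport (Fin n) (p * C)⁻¹ (n.choose p * (p * C) ^ (n.choose p - 1)) u := by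
  intro x
  obtain ⟨b, hb⟩ := exists_isEigenframe_hessian hu x
  have heig (i : Fin n) : hessEigen u x i ≤ C :=
    hb.apply_basis_self i ▸ hC x (b i) (b.norm_eq_one i)
  refine ⟨b, pMACoeff p (hessEigen u x), fun i =>
    ⟨inv_le_pMACoeff hpn (hcone x) heig i, pMACoeff_le (hcone x) (heq x) heig i⟩, fun y => ?_⟩
  simpa only [hb.apply_basis_self] using (isSupportingFrame_pMACoeff hu hcone heq hb).sum_le y b

lemma bddAbove_range_hessian_apply_self {E : Type*} [NormedAddCommGroup E] [NormedSpace ℝ E]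
    {v : E → ℝ} {C : ℝ} (hC : ∀ x e, ‖e‖ = 1 → hessian v x e e ≤ C) (e : E) :
    BddAbove (Set.range fun x => hessian v x e e) := by
  refine ⟨‖e‖ ^ 2 * C, ?_⟩
  rintro _ ⟨x, rfl⟩
  obtain rfl | he := eq_or_ne e 0
  · simp
  have hscale : ‖e‖ • ‖e‖⁻¹ • e = e := smul_inv_smul₀ (norm_ne_zero_iff.2 he) e
  calc hessian v x e e = ‖e‖ ^ 2 * hessian v x (‖e‖⁻¹ • e) (‖e‖⁻¹ • e) := by
        nth_rw 1 2 [← hscale]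
        simp only [map_smul, _root_.smul_apply, smul_eq_mul]
        ring
    _ ≤ ‖e‖ ^ 2 * C := by
        gcongr
        exact hC x _ (norm_smul_inv_norm he)

theorem liouville_p_MA_general (hpn : p ≤ n) (hu : ContDiff ℝ 4 u)
    (heq : ∀ x, pMA n p (hessEigen u x) = 1) (hquad : QuadraticGrowth u)
    (hconv : ∀ x, hessEigen u x ∈ GammaHat n (p - 1)) : IsQuadraticPolynomial u := by
  have hu₂ : ContDiff ℝ 2 u := hu.of_le (by norm_num)
  have hcone (x) : hessEigen u x ∈ GammaHat n p := gammaHat_pred_subset n p (hconv x)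
  have hp : 0 < p := Nat.pos_of_ne_zero (ne_zero_of_mem_gammaHat (hcone 0))
  have : Nonempty (Fin n) := ⟨⟨0, hp.trans_le hpn⟩⟩
  obtain ⟨C, hC, hbound⟩ := exists_hessian_le_of_pMA_eq_one hpn hu hconv heq hquad
  have hsupp := hasEllipticSupport_of_hessian_le hpn hu₂ hcone heq hbound
  exact isQuadraticPolynomial_of_hessian_eq hu₂ fun x e =>
    hsupp.hessian_apply_self_eq hu (by positivity) hsupp.le
      (bddAbove_range_hessian_apply_self hbound) x 0 e

end Liouville

/-- **Liouville theorem for the `p`-Monge–Ampère equation.** A smooth entire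
`p`-plurisubharmonic solution of `M_p(D²u) = 1` with quadratic growth that is moreover
`(p−1)`-plurisubharmonic is a quadratic polynomial. -/
theorem liouville_p_MA (n p : ℕ) (hn : 2 ≤ n) (hp : 2 ≤ p) (hpn : p ≤ n)
    (u : EuclideanSpace ℝ (Fin n) → ℝ) (hu : ContDiff ℝ (⊤ : ℕ∞) u)
    (hadm : ∀ x, hessEigen u x ∈ GammaHat n p)
    (heq : ∀ x, pMA n p (hessEigen u x) = 1)
    (hquad : QuadraticGrowth u)
    (hconv : ∀ x, hessEigen u x ∈ GammaHat n (p - 1)) :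
    IsQuadraticPolynomial u :=
  liouville_p_MA_general hpn (hu.of_le (WithTop.coe_le_coe.2 le_top)) heq hquad hconv
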